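/- arXiv:1008.3931 — 3 statements merged into one kernel-verified Lean document; each statement's English description precedes it below -/
import Mathlib

section
/- Let G be a smooth function on a neighborhood of (0,0) in ℝ² with G(0,0) = 0 and ∇G(0,0) = (0,0), let M ≥ 1 and α = α_M(G), and suppose G_M(1,0) ≠ 0, ∂_y G_M(1,0) = 0 and ∂_y² G_M(1,0) = 0. Then: (i) for every η > 0 there exist μ, ν > 0 such that for all (x,y) with 0 < x < μ and |y| < ν x^M one has |∂_y G(x,y)| < η x^{α−M}, |∂_y² G(x,y)| < η x^{α−2M} and |∂_x ∂_y G(x,y)| < η x^{α−M−1}; and (ii) there exist c₁, μ, ν > 0 such that for all (x,y) with 0 < x < μ and |y| < ν x^M one has |∂_x G(x,y)| ≥ c₁ x^{α−1} and |∂_x² G(x,y)| ≥ c₁ x^{α−2}. -/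
open MeasureTheory Set Filter Topology

noncomputable section

/-- Iterated partial derivative `∂ₓᵃ ∂ᵧᵇ R` at `(x, y)`. -/
def pderiv2 (R : ℝ → ℝ → ℝ) (a b : ℕ) (x y : ℝ) : ℝ :=
  iteratedDeriv a (fun x' => iteratedDeriv b (fun y' => R x' y') y) x

/-- Taylor coefficient `R_{ab} = ∂ₓᵃ ∂ᵧᵇ R(0,0) / (a! b!)`. -/
def tcoeff (R : ℝ → ℝ → ℝ) (a b : ℕ) : ℝ :=
  pderiv2 R a b 0 0 / (Nat.factorial a * Nat.factorial b)

/-- The support of the Taylor series of `R` at the origin. -/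
def tsupp (R : ℝ → ℝ → ℝ) : Set (ℕ × ℕ) := {p | tcoeff R p.1 p.2 ≠ 0}

/-- The Newton polygon of `R`. -/
def newtonPolygon (R : ℝ → ℝ → ℝ) : Set (ℝ × ℝ) :=
  convexHull ℝ (⋃ p ∈ tsupp R, {q : ℝ × ℝ | (p.1 : ℝ) ≤ q.1 ∧ (p.2 : ℝ) ≤ q.2})

/-- The Newton distance of `R`. -/
def newtonDist (R : ℝ → ℝ → ℝ) : ℝ := sInf {t : ℝ | (t, t) ∈ newtonPolygon R}

/-- `e` is a compact edge of `N(R)` of slope `-1/M` (with `M > 0`): it is the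
(one-dimensional, compact) face of the Newton polygon cut out by a supporting line
`t₁ + M t₂ = c`. -/
def IsCompactEdge (R : ℝ → ℝ → ℝ) (M : ℝ) (e : Set (ℝ × ℝ)) : Prop :=
  0 < M ∧ ∃ c : ℝ, (∀ q ∈ newtonPolygon R, c ≤ q.1 + M * q.2) ∧
    e = {q ∈ newtonPolygon R | q.1 + M * q.2 = c} ∧
    ∃ v w : ℝ × ℝ, v ≠ w ∧ e = segment ℝ v w

/-- The edge polynomial `R_e(x,y) = Σ_{(a,b) ∈ e ∩ supp R} R_{ab} x^a y^b`. -/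
def edgePoly (R : ℝ → ℝ → ℝ) (e : Set (ℝ × ℝ)) (x y : ℝ) : ℝ :=
  ∑' p : ℕ × ℕ,
    Set.indicator {p : ℕ × ℕ | ((p.1 : ℝ), (p.2 : ℝ)) ∈ e}
      (fun p => tcoeff R p.1 p.2 * x ^ p.1 * y ^ p.2) p

/-- `p` has a zero of order exactly `m` at `y₀`. -/
def ZeroOfOrder (p : ℝ → ℝ) (m : ℕ) (y₀ : ℝ) : Prop :=
  (∀ j < m, iteratedDeriv j p y₀ = 0) ∧ iteratedDeriv m p y₀ ≠ 0

/-- `R` is in nonadapted coordinates: the bisectrix meets the interior of a compact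
edge `e` such that `R_e(1, ⬝)` has a real zero of order greater than `d(R)`. -/
def IsNonadapted (R : ℝ → ℝ → ℝ) : Prop :=
  ∃ (M : ℝ) (e : Set (ℝ × ℝ)) (v w : ℝ × ℝ), IsCompactEdge R M e ∧ v ≠ w ∧
    e = segment ℝ v w ∧ (∃ t : ℝ, (t, t) ∈ openSegment ℝ v w) ∧
    ∃ (y₀ : ℝ) (m : ℕ), newtonDist R < (m : ℝ) ∧
      ZeroOfOrder (fun y => edgePoly R e 1 y) m y₀

/-- `R` is in generic adapted coordinates: adapted coordinates, every compact edge has slope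
at least `-1`, and the Newton polygon meets the `t₂`-axis. -/
def GenericAdapted (R : ℝ → ℝ → ℝ) : Prop :=
  ¬ IsNonadapted R ∧ (∀ M e, IsCompactEdge R M e → 1 ≤ M) ∧
    ∃ t : ℝ, ((0 : ℝ), t) ∈ newtonPolygon R

/-- `α_M(R) = min {a + M b : (a,b) ∈ supp R}`. -/
def alphaM (R : ℝ → ℝ → ℝ) (M : ℝ) : ℝ :=
  sInf {t : ℝ | ∃ p ∈ tsupp R, t = (p.1 : ℝ) + M * p.2}

/-- `R_M`, the sum of the terms of the Taylor series of `R` of minimal `M`-weighted degree. -/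
def RMpart (R : ℝ → ℝ → ℝ) (M : ℝ) (x y : ℝ) : ℝ :=
  ∑' p : ℕ × ℕ,
    Set.indicator {p : ℕ × ℕ | p ∈ tsupp R ∧ (p.1 : ℝ) + M * p.2 = alphaM R M}
      (fun p => tcoeff R p.1 p.2 * x ^ p.1 * y ^ p.2) p

/-- The Hessian determinant of `f`. -/
def hessDet (f : ℝ → ℝ → ℝ) (x y : ℝ) : ℝ :=
  pderiv2 f 2 0 x y * pderiv2 f 0 2 x y - (pderiv2 f 1 1 x y) ^ 2

/-- `F*(x,y) = (Σ_{(a,b) vertex of N(F)} x^{2a} y^{2b})^{1/2}`. -/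
def vertexFn (F : ℝ → ℝ → ℝ) (x y : ℝ) : ℝ :=
  Real.sqrt (∑' p : ℕ × ℕ,
    Set.indicator
      {p : ℕ × ℕ | ((p.1 : ℝ), (p.2 : ℝ)) ∈ (newtonPolygon F).extremePoints ℝ}
      (fun p => x ^ (2 * p.1) * y ^ (2 * p.2)) p)

/-!
On the sliver `|y| < ν x ^ M` a factor `y` counts as `o(x ^ M)`. Taylor expansion along the `x`-axis
gives `∂ₓⁱ∂ᵧʲG(x, 0) = O(x ^ (α - i - M j))`, with leading coefficient read off from `∂ᵧʲG_M(1, 0)`.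
By the mean value inequality in `y`, the bound `O(x ^ (α - i - M (j + 1)))` on `∂ₓⁱ∂ᵧʲ⁺¹G` makes
`∂ₓⁱ∂ᵧʲG(x, y) - ∂ₓⁱ∂ᵧʲG(x, 0)` of size `o(x ^ (α - i - M j))`. For large `j` the exponent is
negative and mere boundedness suffices, so descending induction on `j` gives these bounds for all
`i`, `j`: up to a negligible error, each derivative of `G` on the sliver is its value on the axis.
-/

open Asymptotics
open scoped ContDiff

section PartialDerivatives

variable {E : Type*} [NormedAddCommGroup E] [NormedSpace ℝ E] {f : ℝ × ℝ → E} {p : ℝ × ℝ}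

theorem hasDerivAt_fst_of_differentiableAt (h : DifferentiableAt ℝ f p) :
    HasDerivAt (fun s => f (s, p.2)) (fderiv ℝ f p (1, 0)) p.1 :=
  h.hasFDerivAt.comp_hasDerivAt (f := fun s => (s, p.2)) p.1
    ((hasDerivAt_id _).prodMk (hasDerivAt_const _ _))

theorem hasDerivAt_snd_of_differentiableAt (h : DifferentiableAt ℝ f p) :
    HasDerivAt (fun t => f (p.1, t)) (fderiv ℝ f p (0, 1)) p.2 :=
  h.hasFDerivAt.comp_hasDerivAt (f := fun t => (p.1, t)) p.2
    ((hasDerivAt_const _ _).prodMk (hasDerivAt_id _))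

theorem eventually_differentiableAt_of_contDiffAt {n : ℕ∞ω} (h : ContDiffAt ℝ n f p)
    (hn : 1 ≤ n) : ∀ᶠ q in 𝓝 p, DifferentiableAt ℝ f q :=
  ((h.of_le hn).eventually (by simp)).mono fun _ hq => hq.differentiableAt one_ne_zero

theorem deriv_fst_eventuallyEq_fderiv {n : ℕ∞ω} (h : ContDiffAt ℝ n f p) (hn : 1 ≤ n) :
    (fun q : ℝ × ℝ => deriv (fun s => f (s, q.2)) q.1) =ᶠ[𝓝 p] fun q => fderiv ℝ f q (1, 0) :=
  (eventually_differentiableAt_of_contDiffAt h hn).mono fun _ hq =>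
    (hasDerivAt_fst_of_differentiableAt hq).deriv

theorem deriv_snd_eventuallyEq_fderiv {n : ℕ∞ω} (h : ContDiffAt ℝ n f p) (hn : 1 ≤ n) :
    (fun q : ℝ × ℝ => deriv (fun t => f (q.1, t)) q.2) =ᶠ[𝓝 p] fun q => fderiv ℝ f q (0, 1) :=
  (eventually_differentiableAt_of_contDiffAt h hn).mono fun _ hq =>
    (hasDerivAt_snd_of_differentiableAt hq).deriv

theorem contDiffAt_deriv_fst {m n : ℕ∞ω} (h : ContDiffAt ℝ n f p) (hmn : m + 1 ≤ n) :
    ContDiffAt ℝ m (fun q : ℝ × ℝ => deriv (fun s => f (s, q.2)) q.1) p :=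
  ((h.fderiv_right hmn).clm_apply contDiffAt_const).congr_of_eventuallyEq
    (deriv_fst_eventuallyEq_fderiv h (le_add_self.trans hmn))

theorem contDiffAt_deriv_snd {m n : ℕ∞ω} (h : ContDiffAt ℝ n f p) (hmn : m + 1 ≤ n) :
    ContDiffAt ℝ m (fun q : ℝ × ℝ => deriv (fun t => f (q.1, t)) q.2) p :=
  ((h.fderiv_right hmn).clm_apply contDiffAt_const).congr_of_eventuallyEq
    (deriv_snd_eventuallyEq_fderiv h (le_add_self.trans hmn))

theorem tendsto_prodMk_left (p : ℝ × ℝ) : Tendsto (fun s => (s, p.2)) (𝓝 p.1) (𝓝 p) :=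
  (Continuous.prodMk_left p.2).tendsto p.1

theorem tendsto_prodMk_right (p : ℝ × ℝ) : Tendsto (fun t => (p.1, t)) (𝓝 p.2) (𝓝 p) :=
  (Continuous.prodMk_right p.1).tendsto p.2

theorem deriv_snd_deriv_fst_comm (h : ContDiffAt ℝ 2 f p) :
    deriv (fun t => deriv (fun s => f (s, t)) p.1) p.2 =
      deriv (fun s => deriv (fun t => f (s, t)) p.2) p.1 := by
  have hd : DifferentiableAt ℝ (fderiv ℝ f) p :=
    (h.fderiv_right (m := 1) le_rfl).differentiableAt one_ne_zero
  have hyx := (hasDerivAt_snd_of_differentiableAt hd).clm_apply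
    (hasDerivAt_const p.2 ((1 : ℝ), (0 : ℝ)))
  have hxy := (hasDerivAt_fst_of_differentiableAt hd).clm_apply
    (hasDerivAt_const p.1 ((0 : ℝ), (1 : ℝ)))
  have hsymm : IsSymmSndFDerivAt ℝ f p := h.isSymmSndFDerivAt (by simp)
  calc deriv (fun t => deriv (fun s => f (s, t)) p.1) p.2
      = deriv (fun t => fderiv ℝ f (p.1, t) (1, 0)) p.2 :=
        ((deriv_fst_eventuallyEq_fderiv h one_le_two).comp_tendsto
          (tendsto_prodMk_right p)).deriv_eq
    _ = fderiv ℝ (fderiv ℝ f) p (0, 1) (1, 0) := by simpa using hyx.deriv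
    _ = fderiv ℝ (fderiv ℝ f) p (1, 0) (0, 1) := hsymm.eq _ _
    _ = deriv (fun s => fderiv ℝ f (s, p.2) (0, 1)) p.1 := by simpa using hxy.deriv.symm
    _ = deriv (fun s => deriv (fun t => f (s, t)) p.2) p.1 :=
        ((deriv_snd_eventuallyEq_fderiv h one_le_two).comp_tendsto
          (tendsto_prodMk_left p)).deriv_eq.symm

end PartialDerivatives

section IteratedPartialDerivatives

variable {G : ℝ → ℝ → ℝ} {p : ℝ × ℝ}

theorem pderiv2_succ_fst (G : ℝ → ℝ → ℝ) (i j : ℕ) (x y : ℝ) :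
    pderiv2 G (i + 1) j x y = deriv (fun s => pderiv2 G i j s y) x := by
  simp only [pderiv2, iteratedDeriv_succ]

theorem pderiv2_zero_succ (G : ℝ → ℝ → ℝ) (j : ℕ) (x y : ℝ) :
    pderiv2 G 0 (j + 1) x y = deriv (fun t => pderiv2 G 0 j x t) y := by
  simp only [pderiv2, iteratedDeriv_zero, iteratedDeriv_succ]

theorem iteratedDeriv_pderiv2 (G : ℝ → ℝ → ℝ) (a i j : ℕ) (x y : ℝ) :
    iteratedDeriv a (fun s => pderiv2 G i j s y) x = pderiv2 G (a + i) j x y := by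
  simp only [pderiv2, iteratedDeriv_eq_iterate, Function.iterate_add_apply]

theorem contDiffAt_pderiv2 (hG : ContDiffAt ℝ ∞ (fun p : ℝ × ℝ => G p.1 p.2) p) (i j : ℕ) :
    ContDiffAt ℝ ∞ (fun q : ℝ × ℝ => pderiv2 G i j q.1 q.2) p := by
  induction i with
  | zero =>
    induction j with
    | zero => simpa only [pderiv2, iteratedDeriv_zero] using hG
    | succ j ih => simpa only [pderiv2_zero_succ] using contDiffAt_deriv_snd ih (by simp)
  | succ i ih => simpa only [pderiv2_succ_fst] using contDiffAt_deriv_fst ih (by simp)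

theorem pderiv2_succ_snd_eventuallyEq (hG : ContDiffAt ℝ ∞ (fun p : ℝ × ℝ => G p.1 p.2) p)
    (i j : ℕ) :
    (fun q : ℝ × ℝ => pderiv2 G i (j + 1) q.1 q.2) =ᶠ[𝓝 p]
      fun q => deriv (fun t => pderiv2 G i j q.1 t) q.2 := by
  induction i with
  | zero => exact .of_eq (funext fun q => pderiv2_zero_succ G j q.1 q.2)
  | succ i ih =>
    have hC2 : ∀ᶠ q in 𝓝 p, ContDiffAt ℝ 2 (fun q : ℝ × ℝ => pderiv2 G i j q.1 q.2) q :=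
      ((contDiffAt_pderiv2 hG i j).of_le (WithTop.coe_le_coe.2 le_top)).eventually (by simp)
    filter_upwards [ih.eventuallyEq_nhds, hC2] with q hq hq2
    simp only [pderiv2_succ_fst]
    rw [deriv_snd_deriv_fst_comm hq2]
    exact (hq.comp_tendsto (tendsto_prodMk_left q)).deriv_eq

theorem eventually_hasDerivAt_snd_pderiv2
    (hG : ContDiffAt ℝ ∞ (fun p : ℝ × ℝ => G p.1 p.2) p) (i j : ℕ) :
    ∀ᶠ q in 𝓝 p, HasDerivAt (fun t => pderiv2 G i j q.1 t) (pderiv2 G i (j + 1) q.1 q.2) q.2 := by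
  filter_upwards [pderiv2_succ_snd_eventuallyEq hG i j,
    eventually_differentiableAt_of_contDiffAt (contDiffAt_pderiv2 hG i j) (by simp)] with q hq hd
  rw [hq]
  exact (hasDerivAt_snd_of_differentiableAt hd).differentiableAt.hasDerivAt

theorem contDiffAt_pderiv2_axis (hG : ContDiffAt ℝ ∞ (fun p : ℝ × ℝ => G p.1 p.2) p)
    (i j : ℕ) : ContDiffAt ℝ ∞ (fun s => pderiv2 G i j s p.2) p.1 :=
  (contDiffAt_pderiv2 hG i j).comp (f := fun s => (s, p.2)) p.1 (by fun_prop)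

end IteratedPartialDerivatives

section OneVariable

variable {E : Type*} [NormedAddCommGroup E] [NormedSpace ℝ E] {f : ℝ → E} {γ δ : ℝ}

theorem rpow_isLittleO_rpow_nhdsGT (h : γ < δ) :
    (fun x : ℝ => x ^ δ) =o[𝓝[>] 0] fun x => x ^ γ := by
  have hlim : Tendsto (fun x : ℝ => x ^ (δ - γ)) (𝓝[>] 0) (𝓝 0) := by
    have := (Real.continuousAt_rpow_const 0 (δ - γ) (.inr (sub_pos.2 h).le)).tendsto
    rw [Real.zero_rpow (sub_pos.2 h).ne'] at this
    exact this.mono_left nhdsWithin_le_nhds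
  refine (((isLittleO_one_iff ℝ).2 hlim).mul_isBigO (isBigO_refl (fun x : ℝ => x ^ γ) _)).congr'
    ?_ (.of_eq (funext fun x => one_mul _))
  filter_upwards [self_mem_nhdsWithin] with x hx
  rw [← Real.rpow_add hx, sub_add_cancel]

theorem rpow_isBigO_rpow_nhdsGT (h : γ ≤ δ) :
    (fun x : ℝ => x ^ δ) =O[𝓝[>] 0] fun x => x ^ γ :=
  h.eq_or_lt.elim (fun h => h ▸ isBigO_refl _ _) fun h => (rpow_isLittleO_rpow_nhdsGT h).isBigO

theorem isLittleO_sub_leadingTerm {m : ℕ} (hf : ContDiffAt ℝ m f 0)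
    (h : ∀ a < m, iteratedDeriv a f 0 = 0) :
    (fun x => f x - x ^ m • (m.factorial : ℝ)⁻¹ • iteratedDeriv m f 0) =o[𝓝 0] fun x => x ^ m := by
  obtain ⟨r, hr, hball⟩ := Metric.eventually_nhds_iff_ball.1 (hf.eventually (by simp))
  have h0 : (0 : ℝ) ∈ Metric.ball 0 r := Metric.mem_ball_self hr
  have htaylor := taylor_isLittleO (convex_ball 0 r) h0
    fun x hx => (hball x hx).contDiffWithinAt
  have hderiv : ∀ k ≤ m, iteratedDerivWithin k f (Metric.ball 0 r) 0 = iteratedDeriv k f 0 :=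
    fun k hk => iteratedDerivWithin_eq_iteratedDeriv Metric.isOpen_ball.uniqueDiffOn
      (hf.of_le (by exact_mod_cast hk)) h0
  have heval : ∀ x, taylorWithinEval f m (Metric.ball 0 r) 0 x =
      x ^ m • (m.factorial : ℝ)⁻¹ • iteratedDeriv m f 0 := fun x => by
    rw [taylor_within_apply, Finset.sum_range_succ, Finset.sum_eq_zero fun k hk => ?_,
      hderiv m le_rfl, zero_add, sub_zero, smul_smul, mul_comm]
    · have hkm := Finset.mem_range.1 hk
      rw [hderiv k hkm.le, h k hkm, smul_zero]
  simpa only [heval, sub_zero, Metric.isOpen_ball.nhdsWithin_eq h0] using htaylor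

theorem isBigO_pow_of_iteratedDeriv_eq_zero {m : ℕ} (hf : ContDiffAt ℝ m f 0)
    (h : ∀ a < m, iteratedDeriv a f 0 = 0) : f =O[𝓝 0] fun x => x ^ m := by
  have hlead : (fun x : ℝ => x ^ m • (m.factorial : ℝ)⁻¹ • iteratedDeriv m f 0) =O[𝓝 0]
      fun x => x ^ m := by
    simpa only [smul_eq_mul, mul_one] using
      (isBigO_refl (fun x : ℝ => x ^ m) (𝓝 0)).smul (isBigO_const_const _ (one_ne_zero' ℝ) _)
  simpa only [sub_add_cancel] using (isLittleO_sub_leadingTerm hf h).isBigO.add hlead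

theorem isBigO_rpow_of_iteratedDeriv_eq_zero (hf : ContDiffAt ℝ ∞ f 0)
    (h : ∀ a : ℕ, a < γ → iteratedDeriv a f 0 = 0) : f =O[𝓝[>] 0] fun x => x ^ γ := by
  have hpow := isBigO_pow_of_iteratedDeriv_eq_zero (m := ⌈γ⌉₊)
    (hf.of_le (by exact_mod_cast le_top)) fun a ha => h a (Nat.lt_ceil.1 ha)
  refine (hpow.mono nhdsWithin_le_nhds).trans ?_
  simpa only [Real.rpow_natCast] using rpow_isBigO_rpow_nhdsGT (Nat.le_ceil γ)

theorem isLittleO_rpow_of_iteratedDeriv_eq_zero (hf : ContDiffAt ℝ ∞ f 0)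
    (h : ∀ a : ℕ, a ≤ γ → iteratedDeriv a f 0 = 0) : f =o[𝓝[>] 0] fun x => x ^ γ := by
  have hγ : γ < ⌊γ + 1⌋₊ := by linarith [Nat.lt_floor_add_one (γ + 1)]
  have hpow := isBigO_pow_of_iteratedDeriv_eq_zero (m := ⌊γ + 1⌋₊)
    (hf.of_le (by exact_mod_cast le_top)) fun a ha => h a <| by
      have : ((a + 1 : ℕ) : ℝ) ≤ γ + 1 := (Nat.le_floor_iff' a.succ_ne_zero).1 ha
      push_cast at this
      linarith
  refine (hpow.mono nhdsWithin_le_nhds).trans_isLittleO ?_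
  simpa only [Real.rpow_natCast] using rpow_isLittleO_rpow_nhdsGT hγ

end OneVariable

section Sliver

variable {E : Type*} [NormedAddCommGroup E] [NormedSpace ℝ E] {g g' : ℝ × ℝ → E} {M γ : ℝ}

/-- The filter of the slivers `0 < x < μ`, `|y| < ν x ^ M` as `μ, ν → 0` independently. -/
def sliver (M : ℝ) : Filter (ℝ × ℝ) :=
  comap (fun p => (p.1, p.2 / p.1 ^ M)) (𝓝[>] 0 ×ˢ 𝓝 0)

theorem eventually_sliver_iff {P : ℝ × ℝ → Prop} :
    (∀ᶠ p in sliver M, P p) ↔ ∃ μ > (0 : ℝ), ∃ ν > (0 : ℝ), ∀ x y : ℝ,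
      0 < x → x < μ → |y| < ν * x ^ M → P (x, y) := by
  have hbasis := ((nhdsGT_basis (0 : ℝ)).prod (Metric.nhds_basis_ball (x := (0 : ℝ)))).comap
    fun p : ℝ × ℝ => (p.1, p.2 / p.1 ^ M)
  have hmem : ∀ {x y ν : ℝ}, 0 < x → (|y / x ^ M| < ν ↔ |y| < ν * x ^ M) := fun {x y ν} hx => by
    have hxM := Real.rpow_pos_of_pos hx M
    rw [abs_div, abs_of_pos hxM, div_lt_iff₀ hxM]
  rw [sliver, hbasis.eventually_iff]
  constructor
  · rintro ⟨⟨μ, ν⟩, ⟨hμ, hν⟩, H⟩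
    exact ⟨μ, hμ, ν, hν, fun x y hx hxμ hy =>
      H ⟨⟨hx, hxμ⟩, mem_ball_zero_iff.2 ((hmem hx).2 hy)⟩⟩
  · rintro ⟨μ, hμ, ν, hν, H⟩
    exact ⟨(μ, ν), ⟨hμ, hν⟩, fun p hp =>
      H p.1 p.2 hp.1.1 hp.1.2 ((hmem hp.1.1).1 (mem_ball_zero_iff.1 hp.2))⟩

theorem tendsto_prodMk_div_sliver :
    Tendsto (fun p : ℝ × ℝ => (p.1, p.2 / p.1 ^ M)) (sliver M) (𝓝[>] 0 ×ˢ 𝓝 0) :=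
  tendsto_comap

theorem tendsto_fst_sliver : Tendsto Prod.fst (sliver M) (𝓝[>] 0) :=
  (tendsto_prod_iff'.1 tendsto_prodMk_div_sliver).1

theorem eventually_fst_pos_sliver : ∀ᶠ p in sliver M, 0 < p.1 :=
  tendsto_fst_sliver.eventually self_mem_nhdsWithin

theorem snd_isLittleO_sliver : Prod.snd =o[sliver M] fun p => p.1 ^ M := by
  refine isLittleO_of_tendsto' ?_ (tendsto_snd.comp tendsto_prodMk_div_sliver)
  filter_upwards [eventually_fst_pos_sliver] with p hp h
  exact absurd h (Real.rpow_pos_of_pos hp M).ne'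

theorem sliver_le_nhds (hM : 0 < M) : sliver M ≤ 𝓝 (0, 0) := by
  have hfst : Tendsto Prod.fst (sliver M) (𝓝 0) := tendsto_fst_sliver.mono_right nhdsWithin_le_nhds
  have hpow : Tendsto (fun p : ℝ × ℝ => p.1 ^ M) (sliver M) (𝓝 0) := by
    simpa only [Real.zero_rpow hM.ne'] using hfst.rpow_const (.inr hM.le)
  exact hfst.prodMk_nhds (snd_isLittleO_sliver.isBigO.trans_tendsto hpow)

theorem eventually_sliver_forall_abs_le {P : ℝ × ℝ → Prop} (h : ∀ᶠ p in sliver M, P p) :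
    ∀ᶠ p in sliver M, ∀ t, |t| ≤ |p.2| → P (p.1, t) := by
  obtain ⟨μ, hμ, ν, hν, H⟩ := eventually_sliver_iff.1 h
  exact eventually_sliver_iff.2 ⟨μ, hμ, ν, hν, fun x y hx hxμ hy t ht =>
    H x t hx hxμ (ht.trans_lt hy)⟩

theorem eventually_abs_lt_of_isLittleO_sliver {f : ℝ × ℝ → ℝ} {η : ℝ}
    (h : f =o[sliver M] fun p => p.1 ^ γ) (hη : 0 < η) :
    ∀ᶠ p in sliver M, |f p| < η * p.1 ^ γ := by
  filter_upwards [h.def (half_pos hη), eventually_fst_pos_sliver] with p hp hx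
  have hxγ := Real.rpow_pos_of_pos hx γ
  rw [Real.norm_eq_abs, Real.norm_of_nonneg hxγ.le] at hp
  exact hp.trans_lt (mul_lt_mul_of_pos_right (half_lt_self hη) hxγ)

theorem eventually_mul_rpow_le_abs_of_isBigO_sliver {f : ℝ × ℝ → ℝ}
    (h : (fun p => p.1 ^ γ) =O[sliver M] f) :
    ∀ᶠ c in 𝓝[>] 0, ∀ᶠ p in sliver M, c * p.1 ^ γ ≤ |f p| := by
  obtain ⟨C, hC, hbound⟩ := h.exists_pos
  filter_upwards [Ioo_mem_nhdsGT (inv_pos.2 hC)] with c hc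
  filter_upwards [hbound.bound, eventually_fst_pos_sliver] with p hp hx
  have hxγ := Real.rpow_pos_of_pos hx γ
  rw [Real.norm_of_nonneg hxγ.le, ← inv_mul_le_iff₀ hC] at hp
  exact (mul_le_mul_of_nonneg_right hc.2.le hxγ.le).trans hp

theorem isBigO_sub_axis_sliver {φ : ℝ → ℝ}
    (hg : ∀ᶠ p in sliver M, HasDerivAt (fun t => g (p.1, t)) (g' p) p.2)
    (hg' : g' =O[sliver M] fun p => φ p.1) :
    (fun p => g p - g (p.1, 0)) =O[sliver M] fun p => φ p.1 * p.2 := by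
  obtain ⟨C, hC⟩ := hg'.bound
  refine .of_bound C ?_
  filter_upwards [eventually_sliver_forall_abs_le (hg.and hC)] with p hp
  have hmvt := (convex_Icc (-|p.2|) |p.2|).norm_image_sub_le_of_norm_hasDerivWithin_le
    (x := 0) (y := p.2) (fun t ht => (hp t (abs_le.2 ht)).1.hasDerivWithinAt)
    (fun t ht => (hp t (abs_le.2 ht)).2) (abs_le.1 (by simp)) (abs_le.1 le_rfl)
  simpa only [sub_zero, norm_mul, mul_assoc] using hmvt

theorem isLittleO_sub_axis_sliver
    (hg : ∀ᶠ p in sliver M, HasDerivAt (fun t => g (p.1, t)) (g' p) p.2)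
    (hg' : g' =O[sliver M] fun p => p.1 ^ (γ - M)) :
    (fun p => g p - g (p.1, 0)) =o[sliver M] fun p => p.1 ^ γ := by
  have hmul : (fun p : ℝ × ℝ => p.1 ^ (γ - M) * p.2) =o[sliver M]
      fun p => p.1 ^ (γ - M) * p.1 ^ M :=
    (isBigO_refl _ _).mul_isLittleO snd_isLittleO_sliver
  refine (isBigO_sub_axis_sliver (φ := (· ^ (γ - M))) hg hg').trans_isLittleO
    (hmul.congr' .rfl ?_)
  filter_upwards [eventually_fst_pos_sliver] with p hp
  rw [← Real.rpow_add hp, sub_add_cancel]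

end Sliver

section PrincipalPart

variable {G : ℝ → ℝ → ℝ} {M : ℝ}

theorem mem_tsupp_iff {p : ℕ × ℕ} : p ∈ tsupp G ↔ pderiv2 G p.1 p.2 0 0 ≠ 0 := by
  simp [tsupp, tcoeff, Nat.factorial_ne_zero]

theorem alphaM_le (hM : 0 ≤ M) {a b : ℕ} (h : pderiv2 G a b 0 0 ≠ 0) :
    alphaM G M ≤ a + M * b := by
  refine csInf_le ⟨0, ?_⟩ ⟨(a, b), mem_tsupp_iff.2 h, rfl⟩
  rintro _ ⟨q, -, rfl⟩
  positivity

/-- The exponents of the terms of `R_M`, that is, the points of the Taylor support of minimal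
`M`-weighted degree. -/
def principalSupport (R : ℝ → ℝ → ℝ) (M : ℝ) : Set (ℕ × ℕ) :=
  {p | p ∈ tsupp R ∧ (p.1 : ℝ) + M * p.2 = alphaM R M}

theorem finite_principalSupport (G : ℝ → ℝ → ℝ) (hM : 0 < M) : (principalSupport G M).Finite := by
  refine (Set.finite_Iic (⌊alphaM G M⌋₊, ⌊alphaM G M / M⌋₊)).subset ?_
  rintro ⟨a, b⟩ ⟨-, h : (a : ℝ) + M * b = alphaM G M⟩
  have hMb : 0 ≤ M * b := by positivity
  refine ⟨Nat.le_floor (by linarith), Nat.le_floor ?_⟩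
  rw [le_div_iff₀ hM]
  linarith [a.cast_nonneg (α := ℝ)]

theorem RMpart_eq_sum (G : ℝ → ℝ → ℝ) (hM : 0 < M) (x y : ℝ) :
    RMpart G M x y =
      ∑ p ∈ (finite_principalSupport G hM).toFinset, tcoeff G p.1 p.2 * x ^ p.1 * y ^ p.2 := by
  have hmem {p : ℕ × ℕ} := (finite_principalSupport G hM).mem_toFinset (a := p)
  exact (tsum_eq_sum fun p hp => Set.indicator_of_notMem (mt hmem.2 hp) _).trans
    (Finset.sum_congr rfl fun p hp => Set.indicator_of_mem (hmem.1 hp) _)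

theorem iteratedDeriv_RMpart_eq_sum (G : ℝ → ℝ → ℝ) (hM : 0 < M) (b : ℕ) (x : ℝ) :
    iteratedDeriv b (fun y => RMpart G M x y) 0 =
      ∑ p ∈ (finite_principalSupport G hM).toFinset,
        tcoeff G p.1 p.2 * x ^ p.1 * if b = p.2 then (p.2.factorial : ℝ) else 0 := by
  simp only [RMpart_eq_sum G hM]
  rw [iteratedDeriv_fun_sum fun p _ => by fun_prop]
  simp only [iteratedDeriv_const_mul_field, iteratedDeriv_fun_pow_zero, Nat.cast_ite, Nat.cast_zero]

theorem iteratedDeriv_RMpart (hM : 0 < M) {a b : ℕ} (hab : a + M * b = alphaM G M) (x : ℝ) :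
    iteratedDeriv b (fun y => RMpart G M x y) 0 = pderiv2 G a b 0 0 / a.factorial * x ^ a := by
  rw [iteratedDeriv_RMpart_eq_sum G hM, Finset.sum_eq_single (a, b)]
  · simp only [tcoeff, if_true]
    field_simp
  · rintro ⟨a', b'⟩ hp hne
    rw [if_neg, mul_zero]
    rintro rfl
    have hab' : a' + M * b = alphaM G M := ((Set.Finite.mem_toFinset _).1 hp).2
    exact hne (by rw [Nat.cast_injective (add_right_cancel (hab'.trans hab.symm))])
  · intro hnotMem
    have hcoeff : tcoeff G a b = 0 := by
      by_contra hne
      exact hnotMem ((Set.Finite.mem_toFinset _).2 ⟨hne, hab⟩)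
    rw [hcoeff, zero_mul, zero_mul]

theorem exists_add_mul_eq_alphaM_of_iteratedDeriv_RMpart_ne_zero (hM : 0 < M) {b : ℕ} {x : ℝ}
    (h : iteratedDeriv b (fun y => RMpart G M x y) 0 ≠ 0) :
    ∃ a : ℕ, a + M * b = alphaM G M := by
  rw [iteratedDeriv_RMpart_eq_sum G hM] at h
  obtain ⟨⟨a, b'⟩, hp, hne⟩ := Finset.exists_ne_zero_of_sum_ne_zero h
  obtain rfl : b = b' := of_not_not fun hb => hne (by simp only [if_neg hb, mul_zero])
  exact ⟨a, ((Set.Finite.mem_toFinset _).1 hp).2⟩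

end PrincipalPart

section SliverEstimates

variable {G : ℝ → ℝ → ℝ} {M : ℝ}

theorem isBigO_pderiv2_axis (hG : ContDiffAt ℝ ∞ (fun p : ℝ × ℝ => G p.1 p.2) (0, 0))
    (hM : 0 ≤ M) (i j : ℕ) :
    (fun x => pderiv2 G i j x 0) =O[𝓝[>] 0] fun x => x ^ (alphaM G M - i - M * j) := by
  refine isBigO_rpow_of_iteratedDeriv_eq_zero (contDiffAt_pderiv2_axis hG i j) fun a ha => ?_
  rw [iteratedDeriv_pderiv2]
  by_contra hne
  have hα := alphaM_le hM hne
  push_cast at hα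
  linarith

theorem isLittleO_pderiv2_axis (hG : ContDiffAt ℝ ∞ (fun p : ℝ × ℝ => G p.1 p.2) (0, 0))
    (hM : 0 ≤ M) (i : ℕ) {j : ℕ} (hj : ∀ a : ℕ, a + M * j = alphaM G M → pderiv2 G a j 0 0 = 0) :
    (fun x => pderiv2 G i j x 0) =o[𝓝[>] 0] fun x => x ^ (alphaM G M - i - M * j) := by
  refine isLittleO_rpow_of_iteratedDeriv_eq_zero (contDiffAt_pderiv2_axis hG i j) fun a ha => ?_
  rw [iteratedDeriv_pderiv2]
  by_contra hne
  have hα := alphaM_le hM hne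
  refine hne (hj _ (le_antisymm ?_ hα))
  push_cast
  linarith

theorem isLittleO_pderiv2_sub_axis_of_isBigO
    (hG : ContDiffAt ℝ ∞ (fun p : ℝ × ℝ => G p.1 p.2) (0, 0)) (hM : 0 < M) {i j : ℕ} {α : ℝ}
    (h : (fun p : ℝ × ℝ => pderiv2 G i (j + 1) p.1 p.2) =O[sliver M]
      fun p => p.1 ^ (α - i - M * (j + 1 : ℕ))) :
    (fun p : ℝ × ℝ => pderiv2 G i j p.1 p.2 - pderiv2 G i j p.1 0) =o[sliver M]
      fun p => p.1 ^ (α - i - M * j) := by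
  refine isLittleO_sub_axis_sliver
    ((eventually_hasDerivAt_snd_pderiv2 hG i j).filter_mono (sliver_le_nhds hM)) ?_
  have hexp : α - i - M * j - M = α - i - M * (j + 1 : ℕ) := by
    push_cast
    ring
  simpa only [hexp] using h

theorem isBigO_pderiv2 (hG : ContDiffAt ℝ ∞ (fun p : ℝ × ℝ => G p.1 p.2) (0, 0)) (hM : 0 < M)
    (i j : ℕ) :
    (fun p : ℝ × ℝ => pderiv2 G i j p.1 p.2) =O[sliver M]
      fun p => p.1 ^ (alphaM G M - i - M * j) := by
  -- Induct on a bound `k` for the number of `y`-derivatives that make the exponent nonpositive.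
  obtain ⟨k, hk⟩ := exists_nat_ge ((alphaM G M - i - M * j) / M)
  rw [div_le_iff₀ hM] at hk
  induction k generalizing j with
  | zero =>
    have hbdd : (fun p : ℝ × ℝ => pderiv2 G i j p.1 p.2) =O[𝓝 (0, 0)] fun p => p.1 ^ 0 := by
      simpa only [pow_zero] using (contDiffAt_pderiv2 hG i j).continuousAt.isBigO_one ℝ
    have hpow := (rpow_isBigO_rpow_nhdsGT hk).comp_tendsto (tendsto_fst_sliver (M := M))
    refine (hbdd.mono (sliver_le_nhds hM)).trans ?_
    simpa [Function.comp_def] using hpow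
  | succ k ih =>
    have hsucc := ih (j + 1) (by push_cast at hk ⊢; linarith)
    have haxis := (isBigO_pderiv2_axis hG hM.le i j).comp_tendsto (tendsto_fst_sliver (M := M))
    simpa only [Function.comp_def, sub_add_cancel] using
      (isLittleO_pderiv2_sub_axis_of_isBigO hG hM hsucc).isBigO.add haxis

theorem isLittleO_pderiv2_sub_axis (hG : ContDiffAt ℝ ∞ (fun p : ℝ × ℝ => G p.1 p.2) (0, 0))
    (hM : 0 < M) (i j : ℕ) :
    (fun p : ℝ × ℝ => pderiv2 G i j p.1 p.2 - pderiv2 G i j p.1 0) =o[sliver M]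
      fun p => p.1 ^ (alphaM G M - i - M * j) :=
  isLittleO_pderiv2_sub_axis_of_isBigO hG hM (isBigO_pderiv2 hG hM i (j + 1))

theorem isLittleO_pderiv2_of_iteratedDeriv_RMpart_eq_zero
    (hG : ContDiffAt ℝ ∞ (fun p : ℝ × ℝ => G p.1 p.2) (0, 0)) (hM : 0 < M) (i : ℕ) {j : ℕ}
    (hj : iteratedDeriv j (fun y => RMpart G M 1 y) 0 = 0) :
    (fun p : ℝ × ℝ => pderiv2 G i j p.1 p.2) =o[sliver M]
      fun p => p.1 ^ (alphaM G M - i - M * j) := by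
  have hcoeff : ∀ a : ℕ, a + M * j = alphaM G M → pderiv2 G a j 0 0 = 0 := fun a ha => by
    simpa [iteratedDeriv_RMpart hM ha, Nat.factorial_ne_zero] using hj
  have haxis := isLittleO_pderiv2_axis hG hM.le i hcoeff
  simpa only [Function.comp_def, sub_add_cancel] using
    (isLittleO_pderiv2_sub_axis hG hM i j).add (haxis.comp_tendsto tendsto_fst_sliver)

theorem isLittleO_pderiv2_sub_leadingTerm
    (hG : ContDiffAt ℝ ∞ (fun p : ℝ × ℝ => G p.1 p.2) (0, 0)) (hM : 0 < M) {a i j : ℕ}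
    (ha : a + M * j = alphaM G M) (hi : i ≤ a) :
    (fun p : ℝ × ℝ => pderiv2 G i j p.1 p.2 -
      p.1 ^ (a - i) • ((a - i).factorial : ℝ)⁻¹ • pderiv2 G a j 0 0) =o[sliver M]
      fun p => p.1 ^ (a - i) := by
  have haxis := isLittleO_sub_leadingTerm (m := a - i)
    ((contDiffAt_pderiv2_axis hG i j).of_le (WithTop.coe_le_coe.2 le_top)) fun k hk => by
      rw [iteratedDeriv_pderiv2]
      by_contra hne
      have hα := alphaM_le hM.le hne
      have hka : ((k + i : ℕ) : ℝ) < a := by exact_mod_cast (by omega : k + i < a)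
      linarith
  have hexp : alphaM G M - i - M * j = (a - i : ℕ) := by
    rw [Nat.cast_sub hi]
    linarith
  have hsub := isLittleO_pderiv2_sub_axis hG hM i j
  simp only [hexp, Real.rpow_natCast] at hsub
  simpa only [iteratedDeriv_pderiv2, Nat.sub_add_cancel hi, Function.comp_def,
    sub_add_sub_cancel] using
    hsub.add ((haxis.mono nhdsWithin_le_nhds).comp_tendsto tendsto_fst_sliver)

theorem rpow_isBigO_pderiv2_of_iteratedDeriv_RMpart_ne_zero
    (hG : ContDiffAt ℝ ∞ (fun p : ℝ × ℝ => G p.1 p.2) (0, 0)) (hM : 0 < M) {i j : ℕ}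
    (hj : iteratedDeriv j (fun y => RMpart G M 1 y) 0 ≠ 0) (hi : i + M * j ≤ alphaM G M) :
    (fun p : ℝ × ℝ => p.1 ^ (alphaM G M - i - M * j)) =O[sliver M]
      fun p => pderiv2 G i j p.1 p.2 := by
  obtain ⟨a, ha⟩ := exists_add_mul_eq_alphaM_of_iteratedDeriv_RMpart_ne_zero hM hj
  have hia : i ≤ a := by exact_mod_cast (by linarith : (i : ℝ) ≤ a)
  set c := ((a - i).factorial : ℝ)⁻¹ • pderiv2 G a j 0 0 with hc
  have hc0 : c ≠ 0 := by
    rw [iteratedDeriv_RMpart hM ha] at hj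
    exact smul_ne_zero (by positivity) fun h => hj (by rw [h, zero_div, zero_mul])
  have hpow : (fun p : ℝ × ℝ => p.1 ^ (a - i)) =O[sliver M] fun p => p.1 ^ (a - i) • c := by
    simpa only [smul_eq_mul, mul_comm _ c] using isBigO_self_const_mul hc0 _ _
  have hlead := isLittleO_pderiv2_sub_leadingTerm hG hM ha hia
  rw [← hc] at hlead
  have hexp : alphaM G M - i - M * j = (a - i : ℕ) := by
    rw [Nat.cast_sub hia]
    linarith
  simpa only [hexp, Real.rpow_natCast, sub_add_cancel] using
    hpow.trans (hlead.trans_isBigO hpow).right_isBigO_add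

theorem two_le_alphaM (hM : 0 < M) (h0 : G 0 0 = 0) (hx : deriv (fun x => G x 0) 0 = 0)
    (hGM : RMpart G M 1 0 ≠ 0) : 2 ≤ alphaM G M := by
  obtain ⟨n, hn⟩ := exists_add_mul_eq_alphaM_of_iteratedDeriv_RMpart_ne_zero (b := 0) hM hGM
  have hne : pderiv2 G n 0 0 0 ≠ 0 := fun h => hGM <| by
    simpa [h] using iteratedDeriv_RMpart hM hn 1
  have hn2 : 2 ≤ n := by
    by_contra! hlt
    interval_cases n
    · exact hne (by simpa [pderiv2] using h0)
    · exact hne (by simpa [pderiv2] using hx)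
  rw [← hn, Nat.cast_zero, mul_zero, add_zero]
  exact_mod_cast hn2

end SliverEstimates

theorem stmt_7_general (G : ℝ → ℝ → ℝ)
    (hG : ContDiffAt ℝ ∞ (fun p : ℝ × ℝ => G p.1 p.2) (0, 0))
    (h0 : G 0 0 = 0) (hx : deriv (fun x => G x 0) 0 = 0)
    (M : ℝ) (hM : 0 < M)
    (hGM : RMpart G M 1 0 ≠ 0)
    (hGM1 : deriv (fun y => RMpart G M 1 y) 0 = 0)
    (hGM2 : iteratedDeriv 2 (fun y => RMpart G M 1 y) 0 = 0) :
    (∀ η > (0 : ℝ), ∃ μ > (0 : ℝ), ∃ ν > (0 : ℝ), ∀ x y : ℝ,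
      0 < x → x < μ → |y| < ν * x ^ M →
        |pderiv2 G 0 1 x y| < η * x ^ (alphaM G M - M) ∧
        |pderiv2 G 0 2 x y| < η * x ^ (alphaM G M - 2 * M) ∧
        |pderiv2 G 1 1 x y| < η * x ^ (alphaM G M - M - 1)) ∧
    (∃ c₁ > (0 : ℝ), ∃ μ > (0 : ℝ), ∃ ν > (0 : ℝ), ∀ x y : ℝ,
      0 < x → x < μ → |y| < ν * x ^ M →
        c₁ * x ^ (alphaM G M - 1) ≤ |pderiv2 G 1 0 x y| ∧
        c₁ * x ^ (alphaM G M - 2) ≤ |pderiv2 G 2 0 x y|) := by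
  rw [← iteratedDeriv_one] at hGM1
  have hα : 2 ≤ alphaM G M := two_le_alphaM hM h0 hx hGM
  constructor
  · intro η hη
    have hsmall (i : ℕ) {j : ℕ} (hj : iteratedDeriv j (fun y => RMpart G M 1 y) 0 = 0) :=
      eventually_abs_lt_of_isLittleO_sliver
        (isLittleO_pderiv2_of_iteratedDeriv_RMpart_eq_zero hG hM i hj) hη
    have hand := (hsmall 0 hGM1).and ((hsmall 0 hGM2).and (hsmall 1 hGM1))
    simpa [mul_comm M, sub_right_comm _ (1 : ℝ)] using eventually_sliver_iff.1 hand
  · have hlarge (i : ℕ) (hi : (i : ℝ) ≤ alphaM G M) :=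
      eventually_mul_rpow_le_abs_of_isBigO_sliver
        (rpow_isBigO_pderiv2_of_iteratedDeriv_RMpart_ne_zero hG hM (i := i) (j := 0) hGM
          (by simpa using hi))
    obtain ⟨c, ⟨h1, h2⟩, hc⟩ := (((hlarge 1 (by norm_num; linarith)).and
      (hlarge 2 hα)).and self_mem_nhdsWithin).exists
    exact ⟨c, hc, by simpa using eventually_sliver_iff.1 (h1.and h2)⟩

/-- Estimates (2.22a)-(2.22c): bounds on the derivatives of `G` on the sliver
`0 < x < μ`, `|y| < ν x^M`, when `G_M(1,0) ≠ 0` and `∂_y G_M(1,0) = ∂_y² G_M(1,0) = 0`. -/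
theorem stmt_7 (G : ℝ → ℝ → ℝ) (U₀ : Set (ℝ × ℝ)) (hU₀ : U₀ ∈ 𝓝 ((0 : ℝ), (0 : ℝ)))
    (hsm : ContDiffOn ℝ (⊤ : ℕ∞) (fun p : ℝ × ℝ => G p.1 p.2) U₀)
    (h0 : G 0 0 = 0) (hgrad : fderiv ℝ (fun p : ℝ × ℝ => G p.1 p.2) (0, 0) = 0)
    (M : ℝ) (hM : 1 ≤ M)
    (hGM : RMpart G M 1 0 ≠ 0)
    (hGM1 : deriv (fun y => RMpart G M 1 y) 0 = 0)
    (hGM2 : iteratedDeriv 2 (fun y => RMpart G M 1 y) 0 = 0) :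
    (∀ η > (0 : ℝ), ∃ μ > (0 : ℝ), ∃ ν > (0 : ℝ), ∀ x y : ℝ,
      0 < x → x < μ → |y| < ν * x ^ M →
        |pderiv2 G 0 1 x y| < η * x ^ (alphaM G M - M) ∧
        |pderiv2 G 0 2 x y| < η * x ^ (alphaM G M - 2 * M) ∧
        |pderiv2 G 1 1 x y| < η * x ^ (alphaM G M - M - 1)) ∧
    (∃ c₁ > (0 : ℝ), ∃ μ > (0 : ℝ), ∃ ν > (0 : ℝ), ∀ x y : ℝ,
      0 < x → x < μ → |y| < ν * x ^ M →
        c₁ * x ^ (alphaM G M - 1) ≤ |pderiv2 G 1 0 x y| ∧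
        c₁ * x ^ (alphaM G M - 2) ≤ |pderiv2 G 2 0 x y|) := by
  have hG := hsm.contDiffAt hU₀
  have hx := (hasDerivAt_fst_of_differentiableAt (hG.differentiableAt (by simp))).deriv
  exact stmt_7_general G hG h0 (by simpa [hgrad] using hx) M (zero_lt_one.trans_le hM) hGM hGM1 hGM2

end
end

section
/- Let R be a smooth function on a neighborhood of the origin in ℝ² with a zero of order exactly a ≥ 1 at the origin, i.e. every Taylor coefficient R_{a'b'} with a' + b' < a vanishes and some Taylor coefficient with a' + b' = a is nonzero. Then there exists an invertible linear map T of ℝ² such that ∂_x^a (R∘T)(0,0) ≠ 0 and ∂_y^a (R∘T)(0,0) ≠ 0; consequently the Newton polygon of R∘T is exactly N(R∘T) = {(t₁,t₂) ∈ ℝ² : t₁ ≥ 0, t₂ ≥ 0, t₁ + t₂ ≥ a}. -/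
open MeasureTheory Set Filter Topology

noncomputable section

/-!
The Taylor coefficients of order `k` of `R` at the origin are, up to factorials, the values of
`Dᵏ R(0)` on tuples of standard basis vectors. Since `Dᵏ R(0)` is symmetric, the order of vanishing
says exactly that `Dᵏ R(0) = 0` for `k < a` and `Dᵃ R(0) ≠ 0`, a condition invariant under linear
changes of variables. By polarization, `v ↦ Dᵃ R(0)(v, …, v)` is not identically zero. The vectors
where it does not vanish form a nonempty open set, which therefore contains a basis; let `T` map
the standard basis to it. Both pure derivatives of order `a` of `R ∘ T` are then nonzero, so its
Newton polygon contains the quadrants at `(a, 0)` and `(0, a)`, hence their convex hull, while no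
term of order less than `a` occurs.
-/

/-- The `n`-tuple `(v, …, v, w, …, w)` with `m` leading copies of `v`, the argument at which the
`n`-th derivative gives the mixed derivative `∂ᵥᵐ ∂_wⁿ⁻ᵐ`. If `m ≥ n`, all entries are `v`. -/
def blockTuple {E : Type*} (n m : ℕ) (v w : E) : Fin n → E :=
  fun l => if (l : ℕ) < m then v else w

theorem blockTuple_zero {E : Type*} (n : ℕ) (v w : E) : blockTuple n 0 v w = fun _ => w := by
  ext
  simp [blockTuple]

theorem blockTuple_self {E : Type*} (n : ℕ) (v w : E) : blockTuple n n v w = fun _ => v := by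
  ext
  simp [blockTuple]

theorem cons_blockTuple {E : Type*} (n m : ℕ) (v w : E) :
    Fin.cons v (blockTuple n m v w) = blockTuple (n + 1) (m + 1) v w := by
  ext l
  cases l using Fin.cases <;> simp [blockTuple]

theorem eq_blockTuple_of_monotone {n : ℕ} {c : Fin n → Fin 2} (hc : Monotone c) :
    c = blockTuple n (Finset.univ.filter (c · ≤ 0)).card 0 1 := by
  ext l
  have := Tuple.lt_card_le_iff_apply_le_of_monotone (j := l) (a := 0) hc
  simp only [blockTuple, this]
  split_ifs <;> omega

theorem multilinearMap_eq_zero_of_symmetric_of_blockTuple {R M N : Type*} [CommSemiring R]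
    [AddCommMonoid M] [Module R M] [AddCommMonoid N] [Module R N] {n : ℕ}
    {A : MultilinearMap R (fun _ : Fin n => M) N}
    (hsymm : ∀ (v : Fin n → M) (σ : Equiv.Perm (Fin n)), A (v ∘ σ) = A v)
    (b : Module.Basis (Fin 2) R M)
    (hA : ∀ m ≤ n, A (blockTuple n m (b 0) (b 1)) = 0) : A = 0 := by
  refine Module.Basis.ext_multilinear (fun _ => b) fun c => ?_
  have hsorted : (fun l => b ((c ∘ Tuple.sort c) l)) = blockTuple n
      (Finset.univ.filter ((c ∘ Tuple.sort c) · ≤ 0)).card (b 0) (b 1) := by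
    conv_lhs => rw [eq_blockTuple_of_monotone (Tuple.monotone_sort c)]
    ext l
    simp only [blockTuple, apply_ite b]
  rw [← hsymm _ (Tuple.sort c)]
  change A (fun l => b ((c ∘ Tuple.sort c) l)) = 0
  rw [hsorted]
  exact hA _ ((Finset.card_le_univ _).trans_eq (Fintype.card_fin n))

theorem continuousMultilinearMap_eq_zero_of_symmetric_of_diagonal {𝕜 E F : Type*}
    [NontriviallyNormedField 𝕜] [CharZero 𝕜] [NormedAddCommGroup E] [NormedSpace 𝕜 E]
    [NormedAddCommGroup F] [NormedSpace 𝕜 F] {n : ℕ}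
    {A : ContinuousMultilinearMap 𝕜 (fun _ : Fin n => E) F}
    (hsymm : ∀ (v : Fin n → E) (σ : Equiv.Perm (Fin n)), A (v ∘ σ) = A v)
    (hdiag : ∀ v, A (fun _ => v) = 0) : A = 0 := by
  ext v
  have hsum : ∑ σ : Equiv.Perm (Fin n), A (v ∘ σ) = 0 := by
    have h := A.iteratedFDeriv_comp_diagonal 0 v
    simp only [hdiag] at h
    simpa [Function.comp_def] using h.symm
  have : (n.factorial : 𝕜) • A v = 0 := by
    simpa [hsymm, Fintype.card_perm, ← Nat.cast_smul_eq_nsmul 𝕜] using hsum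
  simpa [Nat.factorial_ne_zero] using this

theorem exists_linearEquiv_basis_mem_of_isOpen {ι 𝕜 E : Type*} [NontriviallyNormedField 𝕜]
    [AddCommGroup E] [TopologicalSpace E] [ContinuousAdd E] [Module 𝕜 E] [ContinuousSMul 𝕜 E]
    (b : Module.Basis ι 𝕜 E) {U : Set E} (hU : IsOpen U) (hne : U.Nonempty) :
    ∃ T : E ≃ₗ[𝕜] E, ∀ i, T (b i) ∈ U := by
  have hspan : Submodule.span 𝕜 U = ⊤ :=
    Submodule.eq_top_of_nonempty_interior' _
      (hne.mono (interior_maximal Submodule.subset_span hU))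
  let b' := Module.Basis.ofSpan hspan.ge
  refine ⟨b.equiv b' (b.indexEquiv b'), fun i => ?_⟩
  rw [Module.Basis.equiv_apply]
  exact Module.Basis.ofSpan_subset hspan.ge (mem_range_self _)

theorem tail_comp_swap_succ_succ {E : Type*} {n : ℕ} (v : Fin (n + 1) → E) (i j : Fin n) :
    Fin.tail (v ∘ Equiv.swap i.succ j.succ) = Fin.tail v ∘ Equiv.swap i j := by
  ext l
  simp [Fin.tail, (Fin.succ_injective n).swap_apply]

section IteratedFDeriv

variable {𝕜 E F : Type*} [NontriviallyNormedField 𝕜] [NormedAddCommGroup E]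
  [NormedSpace 𝕜 E] [NormedAddCommGroup F] [NormedSpace 𝕜 F] {f : E → F} {x : E} {n : ℕ}

theorem iteratedFDeriv_succ_succ_apply_left (hf : ContDiffAt 𝕜 (n + 2 : ℕ) f x)
    (v : Fin (n + 2) → E) :
    iteratedFDeriv 𝕜 (n + 2) f x v =
      fderiv 𝕜 (fderiv 𝕜 (iteratedFDeriv 𝕜 n f)) x (v 0) (v 1) (Fin.tail (Fin.tail v)) := by
  have hdiff : DifferentiableAt 𝕜 (iteratedFDeriv 𝕜 (n + 1) f) x :=
    hf.differentiableAt_iteratedFDeriv (mod_cast Nat.lt_succ_self _)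
  have hdiff₂ : DifferentiableAt 𝕜 (fderiv 𝕜 (iteratedFDeriv 𝕜 n f)) x :=
    ((hf.iteratedFDeriv_right (m := 2) (i := n) (by norm_cast; omega)).fderiv_right (m := 1)
      (by norm_num [one_add_one_eq_two])).differentiableAt one_ne_zero
  have hderiv : HasFDerivAt
      (fun y => fderiv 𝕜 (iteratedFDeriv 𝕜 n f) y (v 1) (Fin.tail (Fin.tail v))) _ x :=
    (hdiff₂.hasFDerivAt.clm_apply (hasFDerivAt_const (v 1) x)).continuousMultilinear_apply_const _
  rw [hdiff.iteratedFDeriv_succ_apply_left']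
  simp only [iteratedFDeriv_succ_apply_left]
  simpa [show Fin.tail v 0 = v 1 from rfl] using congrArg (· (v 0)) hderiv.fderiv

theorem iteratedFDeriv_comp_continuousLinearEquiv {G : Type*} [NormedAddCommGroup G]
    [NormedSpace 𝕜 G] (T : G ≃L[𝕜] E) (f : E → F) (x : G) (n : ℕ) :
    iteratedFDeriv 𝕜 n (f ∘ T) x =
      (iteratedFDeriv 𝕜 n f (T x)).compContinuousLinearMap fun _ => (T : G →L[𝕜] E) := by
  simpa only [iteratedFDerivWithin_univ, preimage_univ] using
    T.iteratedFDerivWithin_comp_right f uniqueDiffOn_univ (mem_univ (T x)) n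

-- `N` is not replaced by `n + m`: when `n = 0` this would lead to the type `Fin (0 + m)`.
theorem iteratedDeriv_iteratedFDeriv_line {c : 𝕜 → E} {v w : E} (hc : ∀ t, HasDerivAt c v t)
    {N m n : ℕ} (hN : n + m = N) {t : 𝕜} (hf : ContDiffAt 𝕜 N f (c t)) :
    iteratedDeriv m (fun s => iteratedFDeriv 𝕜 n f (c s) fun _ => w) t =
      iteratedFDeriv 𝕜 N f (c t) (blockTuple N m v w) := by
  induction m generalizing N t with
  | zero =>
    subst hN
    simp [blockTuple_zero]
  | succ m ih =>
    subst hN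
    have hnear : ∀ᶠ s in 𝓝 t, ContDiffAt 𝕜 (n + m : ℕ) f (c s) :=
      (hc t).continuousAt.eventually
        ((hf.of_le (mod_cast Nat.le_succ _)).eventually (by simp [-Nat.cast_add]))
    have hdiff : DifferentiableAt 𝕜 (iteratedFDeriv 𝕜 (n + m) f) (c t) :=
      hf.differentiableAt_iteratedFDeriv (mod_cast Nat.lt_succ_self _)
    have hih : iteratedDeriv m (fun s => iteratedFDeriv 𝕜 n f (c s) fun _ => w) =ᶠ[𝓝 t]
        fun s => iteratedFDeriv 𝕜 (n + m) f (c s) (blockTuple (n + m) m v w) := by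
      filter_upwards [hnear] with s hs using ih rfl hs
    have hderiv : HasDerivAt
        (fun s => iteratedFDeriv 𝕜 (n + m) f (c s) (blockTuple (n + m) m v w))
        (fderiv 𝕜 (iteratedFDeriv 𝕜 (n + m) f) (c t) v (blockTuple (n + m) m v w)) t :=
      (hdiff.hasFDerivAt.continuousMultilinear_apply_const _).comp_hasDerivAt t (hc t)
    rw [iteratedDeriv_succ, hih.deriv_eq, hderiv.deriv, ← add_assoc, ← cons_blockTuple]
    rfl

end IteratedFDeriv

section Symmetry

variable {𝕜 E F : Type*} [RCLike 𝕜] [NormedAddCommGroup E] [NormedSpace 𝕜 E]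
  [NormedAddCommGroup F] [NormedSpace 𝕜 F] {f : E → F} {x : E} {n : ℕ}

theorem iteratedFDeriv_comp_swap_zero_one_of_contDiffAt (hf : ContDiffAt 𝕜 (n + 2 : ℕ) f x)
    (v : Fin (n + 2) → E) :
    iteratedFDeriv 𝕜 (n + 2) f x (v ∘ Equiv.swap 0 1) = iteratedFDeriv 𝕜 (n + 2) f x v := by
  have hsymm : IsSymmSndFDerivAt 𝕜 (iteratedFDeriv 𝕜 n f) x :=
    (hf.iteratedFDeriv_right (m := 2) (by norm_cast; omega)).isSymmSndFDerivAt (by simp)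
  have htail : Fin.tail (Fin.tail (v ∘ Equiv.swap 0 1)) = Fin.tail (Fin.tail v) := by
    ext l
    simp [Fin.tail, Equiv.swap_apply_of_ne_of_ne, Fin.ext_iff]
  simp [iteratedFDeriv_succ_succ_apply_left hf, htail, hsymm (v 0) (v 1)]

theorem iteratedFDeriv_comp_swap_castSucc_succ_of_contDiffAt
    (hf : ContDiffAt 𝕜 (n + 1 : ℕ) f x) (v : Fin (n + 1) → E) (i : Fin n) :
    iteratedFDeriv 𝕜 (n + 1) f x (v ∘ Equiv.swap i.castSucc i.succ) =
      iteratedFDeriv 𝕜 (n + 1) f x v := by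
  induction n generalizing x with
  | zero => exact i.elim0
  | succ n ih =>
    cases i using Fin.cases with
    | zero => exact iteratedFDeriv_comp_swap_zero_one_of_contDiffAt hf v
    | succ j =>
      have hdiff : DifferentiableAt 𝕜 (iteratedFDeriv 𝕜 (n + 1) f) x :=
        hf.differentiableAt_iteratedFDeriv (mod_cast Nat.lt_succ_self _)
      have hnear : ∀ᶠ y in 𝓝 x, ContDiffAt 𝕜 (n + 1 : ℕ) f y :=
        (hf.of_le (mod_cast Nat.le_succ _)).eventually (by simp)
      have htail : (fun y => iteratedFDeriv 𝕜 (n + 1) f y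
          (Fin.tail (v ∘ Equiv.swap j.succ.castSucc j.succ.succ))) =ᶠ[𝓝 x]
          fun y => iteratedFDeriv 𝕜 (n + 1) f y (Fin.tail v) := by
        filter_upwards [hnear] with y hy
        rw [← Fin.succ_castSucc, tail_comp_swap_succ_succ, ih hy]
      rw [hdiff.iteratedFDeriv_succ_apply_left', hdiff.iteratedFDeriv_succ_apply_left',
        htail.fderiv_eq]
      congr 1

theorem iteratedFDeriv_comp_perm_of_contDiffAt (hf : ContDiffAt 𝕜 n f x) (v : Fin n → E)
    (σ : Equiv.Perm (Fin n)) :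
    iteratedFDeriv 𝕜 n f x (v ∘ σ) = iteratedFDeriv 𝕜 n f x v := by
  cases n with
  | zero => simp [Subsingleton.elim σ 1]
  | succ n =>
    induction σ using Submonoid.induction_of_closure_eq_top_right
      (Equiv.Perm.mclosure_swap_castSucc_succ n) with
    | one => rfl
    | mul_right σ τ hτ ih =>
      obtain ⟨i, rfl⟩ := hτ
      rw [Equiv.Perm.coe_mul, ← Function.comp_assoc,
        iteratedFDeriv_comp_swap_castSucc_succ_of_contDiffAt hf, ih]

theorem exists_iteratedFDeriv_diagonal_ne_zero (hf : ContDiffAt 𝕜 n f x)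
    (hne : iteratedFDeriv 𝕜 n f x ≠ 0) : ∃ v, iteratedFDeriv 𝕜 n f x (fun _ => v) ≠ 0 := by
  by_contra! hdiag
  exact hne (continuousMultilinearMap_eq_zero_of_symmetric_of_diagonal
    (iteratedFDeriv_comp_perm_of_contDiffAt hf) hdiag)

theorem exists_linearEquiv_iteratedFDeriv_basis_ne_zero {ι : Type*} (b : Module.Basis ι 𝕜 E)
    (hf : ContDiffAt 𝕜 n f x) (hne : iteratedFDeriv 𝕜 n f x ≠ 0) :
    ∃ T : E ≃ₗ[𝕜] E, ∀ i, iteratedFDeriv 𝕜 n f x (fun _ => T (b i)) ≠ 0 :=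
  exists_linearEquiv_basis_mem_of_isOpen b
    (isOpen_ne_fun ((iteratedFDeriv 𝕜 n f x).cont.comp (continuous_pi fun _ => continuous_id))
      continuous_const)
    (exists_iteratedFDeriv_diagonal_ne_zero hf hne)

end Symmetry

theorem pderiv2_eq_iteratedFDeriv {R : ℝ → ℝ → ℝ} {i j n : ℕ} (hn : i + j = n) {x y : ℝ}
    (hR : ContDiffAt ℝ n (Function.uncurry R) (x, y)) :
    pderiv2 R i j x y =
      iteratedFDeriv ℝ n (Function.uncurry R) (x, y) (blockTuple n i (1, 0) (0, 1)) := by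
  have hline_x (t : ℝ) : HasDerivAt (fun s : ℝ => (s, y)) (1, 0) t :=
    (hasDerivAt_id t).prodMk (hasDerivAt_const t y)
  have hline_y (x' t : ℝ) : HasDerivAt (fun s : ℝ => (x', s)) (0, 1) t :=
    (hasDerivAt_const t x').prodMk (hasDerivAt_id t)
  have hnear : ∀ᶠ x' in 𝓝 x, ContDiffAt ℝ j (Function.uncurry R) (x', y) :=
    (hline_x x).continuousAt.eventually
      ((hR.of_le (mod_cast (by omega : j ≤ n))).eventually (by simp))
  have hinner : (fun x' => iteratedDeriv j (fun y' => R x' y') y) =ᶠ[𝓝 x]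
      fun x' => iteratedFDeriv ℝ j (Function.uncurry R) (x', y) fun _ => (0, 1) := by
    filter_upwards [hnear] with x' hx'
    simpa [blockTuple_self] using
      iteratedDeriv_iteratedFDeriv_line (w := (0, 0)) (hline_y x') (zero_add j) hx'
  rw [pderiv2, hinner.iteratedDeriv_eq,
    iteratedDeriv_iteratedFDeriv_line hline_x (by omega) hR]

theorem tcoeff_eq_zero_iff (R : ℝ → ℝ → ℝ) (i j : ℕ) :
    tcoeff R i j = 0 ↔ pderiv2 R i j 0 0 = 0 := by
  simp [tcoeff, Nat.factorial_ne_zero]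

theorem iteratedFDeriv_eq_zero_iff_tcoeff {R : ℝ → ℝ → ℝ} {n : ℕ}
    (hR : ContDiffAt ℝ n (Function.uncurry R) (0, 0)) :
    iteratedFDeriv ℝ n (Function.uncurry R) (0, 0) = 0 ↔ ∀ i j, i + j = n → tcoeff R i j = 0 := by
  simp only [tcoeff_eq_zero_iff]
  refine ⟨fun h i j hij => ?_, fun h => ContinuousMultilinearMap.toMultilinearMap_injective ?_⟩
  · rw [pderiv2_eq_iteratedFDeriv hij hR, h]
    rfl
  · refine multilinearMap_eq_zero_of_symmetric_of_blockTuple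
      (iteratedFDeriv_comp_perm_of_contDiffAt hR) (Module.Basis.finTwoProd ℝ) fun i hi => ?_
    have hij : i + (n - i) = n := by omega
    simpa [pderiv2_eq_iteratedFDeriv hij hR] using h i (n - i) hij

theorem newtonPolygon_subset {R : ℝ → ℝ → ℝ} {a : ℕ}
    (hlo : ∀ i j, i + j < a → tcoeff R i j = 0) :
    newtonPolygon R ⊆ {q | 0 ≤ q.1 ∧ 0 ≤ q.2 ∧ (a : ℝ) ≤ q.1 + q.2} := by
  refine convexHull_min (iUnion₂_subset ?_) ?_
  · rintro p hp q ⟨hq₁, hq₂⟩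
    have hpa : (a : ℝ) ≤ p.1 + p.2 := mod_cast not_lt.1 (mt (hlo p.1 p.2) hp)
    exact ⟨p.1.cast_nonneg.trans hq₁, p.2.cast_nonneg.trans hq₂, hpa.trans (add_le_add hq₁ hq₂)⟩
  · exact (convex_halfSpace_ge (LinearMap.fst ℝ ℝ ℝ).isLinear 0).inter
      ((convex_halfSpace_ge (LinearMap.snd ℝ ℝ ℝ).isLinear 0).inter
        (convex_halfSpace_ge (LinearMap.fst ℝ ℝ ℝ + LinearMap.snd ℝ ℝ ℝ).isLinear a))

theorem mem_newtonPolygon_of_tcoeff_ne_zero {R : ℝ → ℝ → ℝ} {i j : ℕ} (h : tcoeff R i j ≠ 0)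
    {x y : ℝ} (hx : i ≤ x) (hy : j ≤ y) : (x, y) ∈ newtonPolygon R :=
  subset_convexHull ℝ _ (mem_iUnion₂.2 ⟨(i, j), h, hx, hy⟩)

theorem subset_newtonPolygon {R : ℝ → ℝ → ℝ} {a : ℕ}
    (hx : tcoeff R a 0 ≠ 0) (hy : tcoeff R 0 a ≠ 0) :
    {q | 0 ≤ q.1 ∧ 0 ≤ q.2 ∧ (a : ℝ) ≤ q.1 + q.2} ⊆ newtonPolygon R := by
  rintro ⟨x, y⟩ ⟨hx₀ : 0 ≤ x, hy₀ : 0 ≤ y, hxy : (a : ℝ) ≤ x + y⟩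
  have hmem_x : (x + y, 0) ∈ newtonPolygon R :=
    mem_newtonPolygon_of_tcoeff_ne_zero hx hxy (by simp)
  have hmem_y : (0, x + y) ∈ newtonPolygon R :=
    mem_newtonPolygon_of_tcoeff_ne_zero hy (by simp) hxy
  rcases (add_nonneg hx₀ hy₀).eq_or_lt with hsum | hsum
  · obtain ⟨rfl, rfl⟩ := (add_eq_zero_iff_of_nonneg hx₀ hy₀).1 hsum.symm
    simpa using hmem_x
  · refine (convex_convexHull ℝ _).segment_subset hmem_x hmem_y
      ⟨x / (x + y), y / (x + y), by positivity, by positivity, by field_simp, ?_⟩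
    ext <;> simp <;> field_simp

theorem pderiv2_comp_linearEquiv {R : ℝ → ℝ → ℝ} (T : (ℝ × ℝ) ≃ₗ[ℝ] ℝ × ℝ) {i j n : ℕ}
    (hn : i + j = n) {x y : ℝ} (hR : ContDiffAt ℝ n (Function.uncurry R) (T (x, y))) :
    pderiv2 (fun x y => R (T (x, y)).1 (T (x, y)).2) i j x y =
      iteratedFDeriv ℝ n (Function.uncurry R) (T (x, y))
        (blockTuple n i (T (1, 0)) (T (0, 1))) := by
  let L : (ℝ × ℝ) ≃L[ℝ] ℝ × ℝ := T.toContinuousLinearEquiv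
  have hRL : ContDiffAt ℝ n (Function.uncurry R ∘ L) (x, y) := hR.comp (x, y) L.contDiff.contDiffAt
  have hblock : L ∘ blockTuple n i (1, 0) (0, 1) = blockTuple n i (T (1, 0)) (T (0, 1)) := by
    funext l
    exact apply_ite T _ _ _
  calc pderiv2 (fun x y => R (T (x, y)).1 (T (x, y)).2) i j x y
      = iteratedFDeriv ℝ n (Function.uncurry R ∘ L) (x, y) (blockTuple n i (1, 0) (0, 1)) :=
        pderiv2_eq_iteratedFDeriv hn hRL
    _ = iteratedFDeriv ℝ n (Function.uncurry R) (L (x, y)) (L ∘ blockTuple n i (1, 0) (0, 1)) := by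
        rw [iteratedFDeriv_comp_continuousLinearEquiv]
        rfl
    _ = _ := by rw [hblock]; rfl

-- Since `R` is only `Cᵃ`, its Taylor coefficients of order above `a` are arbitrary and may be junk;
-- this is harmless, as their quadrants lie in `{t₁, t₂ ≥ 0, t₁ + t₂ ≥ a}` anyway.
theorem stmt_8_general (R : ℝ → ℝ → ℝ) (a : ℕ)
    (hR : ContDiffAt ℝ a (Function.uncurry R) (0, 0))
    (hlo : ∀ a' b' : ℕ, a' + b' < a → tcoeff R a' b' = 0)
    (hex : ∃ a' b' : ℕ, a' + b' = a ∧ tcoeff R a' b' ≠ 0) :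
    ∃ T : (ℝ × ℝ) ≃ₗ[ℝ] ℝ × ℝ,
      pderiv2 (fun x y => R (T (x, y)).1 (T (x, y)).2) a 0 0 0 ≠ 0 ∧
      pderiv2 (fun x y => R (T (x, y)).1 (T (x, y)).2) 0 a 0 0 ≠ 0 ∧
      newtonPolygon (fun x y => R (T (x, y)).1 (T (x, y)).2) =
        {q : ℝ × ℝ | 0 ≤ q.1 ∧ 0 ≤ q.2 ∧ (a : ℝ) ≤ q.1 + q.2} := by
  have hRk (k : ℕ) (hka : k ≤ a) : ContDiffAt ℝ k (Function.uncurry R) (0, 0) :=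
    hR.of_le (mod_cast hka)
  have hlow (k : ℕ) (hka : k < a) : iteratedFDeriv ℝ k (Function.uncurry R) (0, 0) = 0 :=
    (iteratedFDeriv_eq_zero_iff_tcoeff (hRk k hka.le)).2 fun i j hij => hlo i j (hij ▸ hka)
  have hlead : iteratedFDeriv ℝ a (Function.uncurry R) (0, 0) ≠ 0 := fun h =>
    let ⟨i, j, hij, hne⟩ := hex
    hne ((iteratedFDeriv_eq_zero_iff_tcoeff hR).1 h i j hij)
  obtain ⟨T, hT⟩ :=
    exists_linearEquiv_iteratedFDeriv_basis_ne_zero (Module.Basis.finTwoProd ℝ) hR hlead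
  have hcomp {i j k : ℕ} (hij : i + j = k) (hka : k ≤ a) :
      pderiv2 (fun x y => R (T (x, y)).1 (T (x, y)).2) i j 0 0 = iteratedFDeriv ℝ k
        (Function.uncurry R) (0, 0) (blockTuple k i (T (1, 0)) (T (0, 1))) := by
    have hT₀ : T (0, 0) = (0, 0) := map_zero T
    rw [pderiv2_comp_linearEquiv T hij (by rw [hT₀]; exact hRk k hka), hT₀]
  have hx : pderiv2 (fun x y => R (T (x, y)).1 (T (x, y)).2) a 0 0 0 ≠ 0 := by
    simpa [hcomp, blockTuple_self] using hT 0
  have hy : pderiv2 (fun x y => R (T (x, y)).1 (T (x, y)).2) 0 a 0 0 ≠ 0 := by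
    simpa [hcomp, blockTuple_zero] using hT 1
  refine ⟨T, hx, hy, (newtonPolygon_subset fun i j hij => ?_).antisymm
    (subset_newtonPolygon (mt (tcoeff_eq_zero_iff ..).1 hx) (mt (tcoeff_eq_zero_iff ..).1 hy))⟩
  rw [tcoeff_eq_zero_iff, hcomp rfl hij.le, hlow _ hij]
  rfl

/-- For a generic invertible linear change of variables `T`, both pure `a`-th derivatives of
`R∘T` are nonzero, and the Newton polygon of `R∘T` is exactly `{t₁, t₂ ≥ 0, t₁ + t₂ ≥ a}`. -/
theorem stmt_8 (R : ℝ → ℝ → ℝ) (U₀ : Set (ℝ × ℝ)) (hU₀ : U₀ ∈ 𝓝 ((0 : ℝ), (0 : ℝ)))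
    (hsm : ContDiffOn ℝ (⊤ : ℕ∞) (fun p : ℝ × ℝ => R p.1 p.2) U₀)
    (a : ℕ) (ha : 1 ≤ a)
    (hlo : ∀ a' b' : ℕ, a' + b' < a → tcoeff R a' b' = 0)
    (hex : ∃ a' b' : ℕ, a' + b' = a ∧ tcoeff R a' b' ≠ 0) :
    ∃ T : (ℝ × ℝ) ≃ₗ[ℝ] ℝ × ℝ,
      pderiv2 (fun x y => R (T (x, y)).1 (T (x, y)).2) a 0 0 0 ≠ 0 ∧
      pderiv2 (fun x y => R (T (x, y)).1 (T (x, y)).2) 0 a 0 0 ≠ 0 ∧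
      newtonPolygon (fun x y => R (T (x, y)).1 (T (x, y)).2) =
        {q : ℝ × ℝ | 0 ≤ q.1 ∧ 0 ≤ q.2 ∧ (a : ℝ) ≤ q.1 + q.2} :=
  stmt_8_general R a ((hsm.contDiffAt hU₀).of_le (mod_cast le_top)) hlo hex

end
end

section
/- Let F be a smooth function on a neighborhood of the origin in ℝ² with F(0,0) = 0, ∇F(0,0) = (0,0) and nonvanishing Taylor series, let V(F) denote the finite set of vertices (extreme points) of the Newton polygon N(F), and define F*(x,y) = (Σ_{(a,b) ∈ V(F)} x^{2a} y^{2b})^{1/2}. Then for every t > 0: the function (x,y) ↦ F*(x,y)^{−t} is integrable on some neighborhood of the origin if and only if t < 1/d(F). -/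
open MeasureTheory Set Filter Topology

noncomputable section

/-!
Write `d` for the Newton distance. A linear functional with positive coefficients attains its
minimum over the Newton polygon at a vertex; applied with the coefficients `-log |x|` and
`-log |y|`, this says that some vertex monomial dominates `|x| ^ s * |y| ^ s` whenever `(s, s)` lies
in the polygon, so `F*⁻ᵗ` is at most a product of integrable powers as soon as `t * s < 1`.
Conversely, let `α * t₁ + β * t₂ ≥ (α + β) * d` be a supporting half-plane at `(d, d)`. On the box
`0 < x < ε ^ α`, `0 < y < ε ^ β` of area `ε ^ (α + β)` one has `F* ≲ ε ^ ((α + β) * d)`, so for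
`t * d ≥ 1` the integral of `F*⁻ᵗ` over these boxes stays bounded below while their area tends to
zero, contradicting the absolute continuity of the integral.
-/

section UpperSets

open scoped Pointwise

theorem exists_finite_subset_upperClosure_image_eq {α β : Type*} [PartialOrder α]
    [WellQuasiOrderedLE α] [Preorder β] {g : α → β} (hg : Monotone g) (s : Set α) :
    ∃ A ⊆ s, A.Finite ∧ upperClosure (g '' A) = upperClosure (g '' s) := by
  have hAs : {a | Minimal (· ∈ s) a} ⊆ s := fun a ha => ha.prop
  refine ⟨_, hAs, WellQuasiOrderedLE.finite_of_isAntichain (setOfPred_minimal_antichain _),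
    le_antisymm ?_ (upperClosure_anti (image_mono hAs))⟩
  rw [le_upperClosure, image_subset_iff]
  intro a ha
  obtain ⟨m, hma, hm⟩ := exists_minimal_le_of_wellFoundedLT (· ∈ s) a ha
  exact mem_upperClosure.2 ⟨g m, mem_image_of_mem g hm, hg hma⟩

theorem exists_mem_extremePoints_add_Ici_forall_le {E : Type*} [AddCommGroup E] [PartialOrder E]
    [Module ℝ E] [TopologicalSpace E] [IsTopologicalAddGroup E] [ContinuousSMul ℝ E] [T2Space E]
    [LocallyConvexSpace ℝ E] [ClosedIciTopology E] {K : Set E} (hK : IsCompact K)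
    (hKne : K.Nonempty) {f : StrongDual ℝ E} (hf : ∀ v, 0 < v → 0 < f v) :
    ∃ x ∈ (K + Ici (0 : E)).extremePoints ℝ, ∀ y ∈ K + Ici (0 : E), f x ≤ f y := by
  have hKN : K ⊆ K + Ici (0 : E) := fun k hk => ⟨k, hk, 0, self_mem_Ici, add_zero k⟩
  set face : Set E := (-f).toExposed (K + Ici 0)
  have hface : ∀ {x}, x ∈ face ↔ x ∈ K + Ici (0 : E) ∧ ∀ y ∈ K + Ici (0 : E), f x ≤ f y := by
    simp [face, ContinuousLinearMap.toExposed]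
  have hexposed : IsExposed ℝ (K + Ici 0) face := ContinuousLinearMap.toExposed.isExposed
  have hnonempty : face.Nonempty := by
    obtain ⟨k₀, hk₀, hmin⟩ := hK.exists_isMinOn hKne f.continuous.continuousOn
    refine ⟨k₀, hface.2 ⟨hKN hk₀, ?_⟩⟩
    rintro _ ⟨k, hk, v, hv, rfl⟩
    have hfv : 0 ≤ f v := hv.eq_or_lt.elim (fun h => by simp [← h]) fun h => (hf v h).le
    rw [map_add]
    exact le_add_of_le_of_nonneg (hmin hk) hfv
  have hsubset : face ⊆ K := by
    intro x hx
    obtain ⟨⟨k, hk, v, hv, rfl⟩, hle⟩ := hface.1 hx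
    have hfv : f v ≤ 0 := by simpa using hle k (hKN hk)
    obtain rfl : v = 0 := by
      by_contra hne
      exact (hf v (lt_of_le_of_ne hv (Ne.symm hne))).not_ge hfv
    simpa using hk
  have hclosed : IsClosed face := hexposed.isClosed (isClosed_Ici.add_left_of_isCompact hK)
  obtain ⟨x, hx⟩ := (hK.of_isClosed_subset hclosed hsubset).extremePoints_nonempty hnonempty
  exact ⟨x, hexposed.isExtreme.extremePoints_subset_extremePoints hx, (hface.1 hx.1).2⟩

variable {E : Type*} [AddCommGroup E] [PartialOrder E] [IsOrderedAddMonoid E]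

theorem coe_upperClosure_eq_add_Ici (s : Set E) : (upperClosure s : Set E) = s + Ici (0 : E) := by
  simpa using (add_upperClosure s {0}).symm

variable [Module ℝ E]

theorem minimal_of_mem_extremePoints {N : Set E} (hN : IsUpperSet N) {x : E}
    (hx : x ∈ N.extremePoints ℝ) : Minimal (· ∈ N) x := by
  refine ⟨hx.1, fun y hy hyx => ?_⟩
  -- `x` is the midpoint of `y` and of its reflection `x + (x - y)`, which lies above `x`.
  have hreflection : x + (x - y) ∈ N := hN (le_add_of_nonneg_right (sub_nonneg.2 hyx)) hx.1
  refine (hx.2 hy hreflection ⟨1 / 2, 1 / 2, by norm_num, by norm_num, by norm_num, ?_⟩).ge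
  module

variable [IsOrderedModule ℝ E]

theorem convexHull_upperClosure (s : Set E) :
    convexHull ℝ (upperClosure s : Set E) = convexHull ℝ s + Ici (0 : E) := by
  rw [coe_upperClosure_eq_add_Ici, convexHull_add, (convex_Ici 0).convexHull_eq]

theorem isUpperSet_convexHull_upperClosure (s : Set E) :
    IsUpperSet (convexHull ℝ (upperClosure s : Set E)) := by
  rw [convexHull_upperClosure]
  exact (isUpperSet_Ici 0).add_left

theorem extremePoints_convexHull_upperClosure_subset (s : Set E) :
    (convexHull ℝ (upperClosure s : Set E)).extremePoints ℝ ⊆ s := by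
  intro x hx
  obtain ⟨a, ha, hax⟩ := mem_upperClosure.1 (extremePoints_convexHull_subset hx)
  have hmin := minimal_of_mem_extremePoints (isUpperSet_convexHull_upperClosure s) hx
  rwa [← hmin.eq_of_le (subset_convexHull ℝ _ (subset_upperClosure ha)) hax]

variable [TopologicalSpace E] [IsTopologicalAddGroup E] [ContinuousSMul ℝ E]

theorem exists_nonneg_dual_ne_zero_of_notMem_interior {N : Set E} (hN : IsUpperSet N)
    (hconv : Convex ℝ N) (hint : (interior N).Nonempty) {x : E} (hx : x ∉ interior N) :
    ∃ f : StrongDual ℝ E, f ≠ 0 ∧ (∀ v, 0 ≤ v → 0 ≤ f v) ∧ ∀ y ∈ N, f x ≤ f y := by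
  obtain ⟨g, hg₀, hg⟩ := geometric_hahn_banach_of_nonempty_interior_point hconv hx hint
  refine ⟨-g, neg_ne_zero.2 hg₀, fun v hv => ?_, fun y hy => neg_le_neg (hg y hy)⟩
  obtain ⟨y, hy⟩ := hint.mono interior_subset
  -- Along the ray `y + r • v ⊆ N` the affine function `r ↦ g y + r * g v` is bounded above.
  have hray : ∀ r : ℝ, 0 ≤ r → g y + r * g v ≤ g x := fun r hr => by
    simpa using hg _ (hN (le_add_of_nonneg_right (smul_nonneg hr hv)) hy)
  by_contra! hneg
  have hgv : 0 < g v := neg_neg_iff_pos.1 hneg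
  have hyx : 0 ≤ g x - g y := sub_nonneg.2 (hg y hy)
  have := hray ((g x - g y + 1) / g v) (by positivity)
  rw [div_mul_cancel₀ _ hgv.ne'] at this
  linarith

end UpperSets

section NewtonPolygon

/-- The inclusion of the lattice of exponents into the plane containing the Newton polygon. -/
def toPlane : ℕ × ℕ ↪o ℝ × ℝ :=
  OrderEmbedding.ofMapLEIff (fun p => ((p.1 : ℝ), (p.2 : ℝ))) fun p q => by simp [Prod.le_def]

variable {F : ℝ → ℝ → ℝ}

theorem newtonPolygon_eq_convexHull_upperClosure (F : ℝ → ℝ → ℝ) :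
    newtonPolygon F = convexHull ℝ (upperClosure (toPlane '' tsupp F) : Set (ℝ × ℝ)) := by
  rw [coe_upperClosure, biUnion_image]
  rfl

open scoped Pointwise in
theorem exists_isCompact_newtonPolygon_eq_add_Ici (F : ℝ → ℝ → ℝ) :
    ∃ K : Set (ℝ × ℝ), IsCompact K ∧ newtonPolygon F = K + Ici 0 := by
  obtain ⟨A, -, hA, hAF⟩ := exists_finite_subset_upperClosure_image_eq toPlane.monotone (tsupp F)
  refine ⟨convexHull ℝ (toPlane '' A), (hA.image _).isCompact_convexHull ℝ, ?_⟩
  rw [newtonPolygon_eq_convexHull_upperClosure, ← hAF, convexHull_upperClosure]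

theorem convex_newtonPolygon (F : ℝ → ℝ → ℝ) : Convex ℝ (newtonPolygon F) :=
  convex_convexHull ℝ _

theorem isUpperSet_newtonPolygon (F : ℝ → ℝ → ℝ) : IsUpperSet (newtonPolygon F) := by
  rw [newtonPolygon_eq_convexHull_upperClosure]
  exact isUpperSet_convexHull_upperClosure _

theorem toPlane_mem_newtonPolygon {p : ℕ × ℕ} (hp : p ∈ tsupp F) :
    toPlane p ∈ newtonPolygon F :=
  subset_convexHull ℝ _ (mem_iUnion₂.2 ⟨p, hp, le_rfl, le_rfl⟩)

theorem le_linear_of_mem_newtonPolygon {α β c : ℝ} (hα : 0 ≤ α) (hβ : 0 ≤ β)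
    (h : ∀ p ∈ tsupp F, c ≤ α * p.1 + β * p.2) {q : ℝ × ℝ} (hq : q ∈ newtonPolygon F) :
    c ≤ α * q.1 + β * q.2 := by
  have hconv : Convex ℝ {q : ℝ × ℝ | c ≤ α * q.1 + β * q.2} := convex_halfSpace_ge
    (α • LinearMap.fst ℝ ℝ ℝ + β • LinearMap.snd ℝ ℝ ℝ).isLinear c
  refine convexHull_min (iUnion₂_subset fun p hp r hr => (h p hp).trans ?_) hconv hq
  exact add_le_add (mul_le_mul_of_nonneg_left hr.1 hα) (mul_le_mul_of_nonneg_left hr.2 hβ)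

theorem exists_mem_extremePoints_newtonPolygon_forall_le (hF : (tsupp F).Nonempty) {u w : ℝ}
    (hu : 0 < u) (hw : 0 < w) :
    ∃ x ∈ (newtonPolygon F).extremePoints ℝ,
      ∀ q ∈ newtonPolygon F, u * x.1 + w * x.2 ≤ u * q.1 + w * q.2 := by
  obtain ⟨K, hK, hFK⟩ := exists_isCompact_newtonPolygon_eq_add_Ici F
  have hKne : K.Nonempty := by
    obtain ⟨p, hp⟩ := hF
    obtain ⟨k, hk, -⟩ := hFK ▸ toPlane_mem_newtonPolygon hp
    exact ⟨k, hk⟩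
  have hpos : ∀ v : ℝ × ℝ, 0 < v →
      0 < (u • ContinuousLinearMap.fst ℝ ℝ ℝ + w • ContinuousLinearMap.snd ℝ ℝ ℝ) v := by
    intro v hv
    obtain ⟨h₁, h₂⟩ | ⟨h₁, h₂⟩ := Prod.lt_iff.1 hv
    · exact add_pos_of_pos_of_nonneg (mul_pos hu h₁) (mul_nonneg hw.le h₂)
    · exact add_pos_of_nonneg_of_pos (mul_nonneg hu.le h₁) (mul_pos hw h₂)
  rw [hFK]
  exact exists_mem_extremePoints_add_Ici_forall_le hK hKne hpos

/-! ### Newton distance -/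

theorem newtonDist_le {t : ℝ} (ht : (t, t) ∈ newtonPolygon F) : newtonDist F ≤ t := by
  refine csInf_le ⟨0, fun s hs => ?_⟩ ht
  simpa using le_linear_of_mem_newtonPolygon (α := 1) (β := 0) (c := 0) zero_le_one le_rfl
    (fun p _ => by simp) hs

theorem exists_diagonal_mem_newtonPolygon (hF : (tsupp F).Nonempty) :
    ∃ t : ℝ, (t, t) ∈ newtonPolygon F :=
  let ⟨p, hp⟩ := hF
  ⟨max p.1 p.2, isUpperSet_newtonPolygon F (a := toPlane p) ⟨le_max_left _ _, le_max_right _ _⟩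
    (toPlane_mem_newtonPolygon hp)⟩

theorem newtonDist_pos (h0 : F 0 0 = 0) (hF : (tsupp F).Nonempty) : 0 < newtonDist F := by
  have hsupp : ∀ p ∈ tsupp F, (1 : ℝ) ≤ 1 * p.1 + 1 * p.2 := by
    rintro ⟨a, b⟩ hab
    have hne : a + b ≠ 0 := by
      rintro h
      obtain ⟨rfl, rfl⟩ := Nat.add_eq_zero_iff.1 h
      exact hab (by simp [tcoeff, pderiv2, h0])
    rw [one_mul, one_mul]
    exact_mod_cast Nat.one_le_iff_ne_zero.2 hne
  have hhalf : 1 / 2 ≤ newtonDist F := le_csInf (exists_diagonal_mem_newtonPolygon hF)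
    fun t ht => by
      linarith [le_linear_of_mem_newtonPolygon zero_le_one zero_le_one hsupp ht]
  linarith

theorem diagonal_newtonDist_notMem_interior (F : ℝ → ℝ → ℝ) :
    (newtonDist F, newtonDist F) ∉ interior (newtonPolygon F) := by
  intro hmem
  have hcont : Continuous fun t : ℝ => (t, t) := by fun_prop
  have hnhds : ∀ᶠ t in 𝓝 (newtonDist F), (t, t) ∈ newtonPolygon F :=
    hcont.continuousAt (mem_interior_iff_mem_nhds.1 hmem)
  obtain ⟨t, htN, ht⟩ := ((hnhds.filter_mono nhdsWithin_le_nhds).and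
    (self_mem_nhdsWithin : Iio (newtonDist F) ∈ 𝓝[<] newtonDist F)).exists
  exact (newtonDist_le htN).not_gt ht

theorem interior_newtonPolygon_nonempty (hF : (tsupp F).Nonempty) :
    (interior (newtonPolygon F)).Nonempty := by
  obtain ⟨p, hp⟩ := hF
  refine ⟨toPlane p + (1, 1), mem_interior.2 ⟨Ioi (toPlane p).1 ×ˢ Ioi (toPlane p).2, ?_,
    isOpen_Ioi.prod isOpen_Ioi, by simp⟩⟩
  exact fun q hq => isUpperSet_newtonPolygon F ⟨hq.1.le, hq.2.le⟩ (toPlane_mem_newtonPolygon hp)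

theorem exists_supporting_line_at_newtonDist (hF : (tsupp F).Nonempty) :
    ∃ α β : ℝ, 0 ≤ α ∧ 0 ≤ β ∧ 0 < α + β ∧
      ∀ q ∈ newtonPolygon F, (α + β) * newtonDist F ≤ α * q.1 + β * q.2 := by
  obtain ⟨f, hf₀, hfnonneg, hfle⟩ := exists_nonneg_dual_ne_zero_of_notMem_interior
    (isUpperSet_newtonPolygon F) (convex_newtonPolygon F) (interior_newtonPolygon_nonempty hF)
    (diagonal_newtonDist_notMem_interior F)
  have hf : ∀ q : ℝ × ℝ, f q = f (1, 0) * q.1 + f (0, 1) * q.2 := fun q => by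
    have hq : q = q.1 • ((1 : ℝ), (0 : ℝ)) + q.2 • ((0 : ℝ), (1 : ℝ)) := by ext <;> simp
    conv_lhs => rw [hq, map_add, map_smul, map_smul, smul_eq_mul, smul_eq_mul]
    ring
  have hα : 0 ≤ f (1, 0) := hfnonneg _ ⟨zero_le_one, le_rfl⟩
  have hβ : 0 ≤ f (0, 1) := hfnonneg _ ⟨le_rfl, zero_le_one⟩
  refine ⟨f (1, 0), f (0, 1), hα, hβ, ?_, fun q hq => ?_⟩
  · by_contra! hle
    have hα₀ : f (1, 0) = 0 := by linarith
    have hβ₀ : f (0, 1) = 0 := by linarith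
    exact hf₀ (ContinuousLinearMap.ext fun q => by simp [hf q, hα₀, hβ₀])
  · rw [add_mul, ← hf q]
    exact (hf _).symm.trans_le (hfle q hq)

/-! ### Vertices -/

theorem finite_setOf_toPlane_mem_extremePoints (F : ℝ → ℝ → ℝ) :
    {p | toPlane p ∈ (newtonPolygon F).extremePoints ℝ}.Finite := by
  refine WellQuasiOrderedLE.finite_of_isAntichain fun p hp r hr hne hpr => hne ?_
  have hmin := minimal_of_mem_extremePoints (isUpperSet_newtonPolygon F) hr
  exact toPlane.injective (hmin.eq_of_le hp.1 (toPlane.monotone hpr))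

/-- The vertices of the Newton polygon, as a finite set of exponents. -/
def newtonVertices (F : ℝ → ℝ → ℝ) : Finset (ℕ × ℕ) :=
  (finite_setOf_toPlane_mem_extremePoints F).toFinset

theorem mem_newtonVertices {p : ℕ × ℕ} :
    p ∈ newtonVertices F ↔ toPlane p ∈ (newtonPolygon F).extremePoints ℝ :=
  Finite.mem_toFinset _

theorem exists_mem_newtonVertices_forall_le (hF : (tsupp F).Nonempty) {u w : ℝ}
    (hu : 0 < u) (hw : 0 < w) :
    ∃ p ∈ newtonVertices F, ∀ q ∈ newtonPolygon F, u * p.1 + w * p.2 ≤ u * q.1 + w * q.2 := by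
  obtain ⟨x, hx, hmin⟩ := exists_mem_extremePoints_newtonPolygon_forall_le hF hu hw
  have hlattice : x ∈ toPlane '' tsupp F :=
    extremePoints_convexHull_upperClosure_subset _ (newtonPolygon_eq_convexHull_upperClosure F ▸ hx)
  obtain ⟨p, -, rfl⟩ := hlattice
  exact ⟨p, mem_newtonVertices.2 hx, hmin⟩

theorem newtonVertices_nonempty (hF : (tsupp F).Nonempty) : (newtonVertices F).Nonempty :=
  let ⟨p, hp, _⟩ := exists_mem_newtonVertices_forall_le hF one_pos one_pos
  ⟨p, hp⟩

end NewtonPolygon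

section MonomialNorm

/-- The Euclidean norm of the vector of monomials `x ^ a * y ^ b`, `(a, b) ∈ V`. The function `F*`
is the case where `V` is the set of vertices of the Newton polygon of `F`. -/
def monomialNorm (V : Finset (ℕ × ℕ)) (p : ℝ × ℝ) : ℝ :=
  √(∑ a ∈ V, p.1 ^ (2 * a.1) * p.2 ^ (2 * a.2))

theorem vertexFn_eq_monomialNorm (F : ℝ → ℝ → ℝ) (x y : ℝ) :
    vertexFn F x y = monomialNorm (newtonVertices F) (x, y) := by
  have hcoe : {p : ℕ × ℕ | ((p.1 : ℝ), (p.2 : ℝ)) ∈ (newtonPolygon F).extremePoints ℝ} =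
      newtonVertices F := Set.ext fun p => mem_newtonVertices.symm
  rw [vertexFn, hcoe, ← sum_eq_tsum_indicator, monomialNorm]

variable {V : Finset (ℕ × ℕ)} {p : ℝ × ℝ}

theorem continuous_monomialNorm (V : Finset (ℕ × ℕ)) : Continuous (monomialNorm V) := by
  unfold monomialNorm
  fun_prop

theorem abs_pow_mul_abs_pow_le_monomialNorm {a : ℕ × ℕ} (ha : a ∈ V) (p : ℝ × ℝ) :
    |p.1| ^ a.1 * |p.2| ^ a.2 ≤ monomialNorm V p := by
  refine Real.le_sqrt_of_sq_le ?_
  have hsq : (|p.1| ^ a.1 * |p.2| ^ a.2) ^ 2 = p.1 ^ (2 * a.1) * p.2 ^ (2 * a.2) := by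
    rw [mul_pow, pow_right_comm, pow_right_comm |p.2|, sq_abs, sq_abs, pow_mul, pow_mul]
  rw [hsq]
  refine Finset.single_le_sum (f := fun a : ℕ × ℕ => p.1 ^ (2 * a.1) * p.2 ^ (2 * a.2))
    (fun b _ => ?_) ha
  simp only [pow_mul]
  positivity

theorem monomialNorm_pos (hV : V.Nonempty) (h₁ : p.1 ≠ 0) (h₂ : p.2 ≠ 0) :
    0 < monomialNorm V p := by
  obtain ⟨a, ha⟩ := hV
  exact lt_of_lt_of_le (by positivity) (abs_pow_mul_abs_pow_le_monomialNorm ha p)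

theorem rpow_mul_rpow_le_monomialNorm {s : ℝ}
    (hV : ∀ u w : ℝ, 0 < u → 0 < w → ∃ a ∈ V, u * a.1 + w * a.2 ≤ u * s + w * s)
    (hp₁ : p.1 ≠ 0) (hp₂ : p.2 ≠ 0) (h₁ : |p.1| < 1) (h₂ : |p.2| < 1) :
    |p.1| ^ s * |p.2| ^ s ≤ monomialNorm V p := by
  have hx := abs_pos.2 hp₁
  have hy := abs_pos.2 hp₂
  obtain ⟨a, ha, hle⟩ := hV _ _ (neg_pos.2 (Real.log_neg hx h₁)) (neg_pos.2 (Real.log_neg hy h₂))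
  refine le_trans ?_ (abs_pow_mul_abs_pow_le_monomialNorm ha p)
  rw [← Real.rpow_natCast, ← Real.rpow_natCast, Real.rpow_def_of_pos hx,
    Real.rpow_def_of_pos hx, Real.rpow_def_of_pos hy, Real.rpow_def_of_pos hy,
    ← Real.exp_add, ← Real.exp_add, Real.exp_le_exp]
  linarith

theorem monomialNorm_le_of_forall_le {M : ℝ} (hM : 0 ≤ M)
    (h : ∀ a ∈ V, |p.1| ^ a.1 * |p.2| ^ a.2 ≤ M) : monomialNorm V p ≤ √V.card * M := by
  rw [monomialNorm, ← Real.sqrt_sq hM, ← Real.sqrt_mul (Nat.cast_nonneg _), ← nsmul_eq_mul]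
  refine Real.sqrt_le_sqrt (Finset.sum_le_card_nsmul _ _ _ fun a ha => ?_)
  calc p.1 ^ (2 * a.1) * p.2 ^ (2 * a.2) = (|p.1| ^ a.1 * |p.2| ^ a.2) ^ 2 := by
        rw [mul_pow, pow_right_comm, pow_right_comm |p.2|, sq_abs, sq_abs, pow_mul, pow_mul]
    _ ≤ M ^ 2 := by gcongr; exact h a ha

theorem pow_mul_pow_le_rpow {α β c ε x y : ℝ} {a b : ℕ} (hε : 0 < ε) (hε₁ : ε ≤ 1)
    (hx₀ : 0 ≤ x) (hy₀ : 0 ≤ y) (hx : x ≤ ε ^ α) (hy : y ≤ ε ^ β) (hc : c ≤ α * a + β * b) :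
    x ^ a * y ^ b ≤ ε ^ c := calc
  x ^ a * y ^ b ≤ (ε ^ α) ^ a * (ε ^ β) ^ b := by gcongr
  _ = ε ^ (α * a + β * b) := by
    rw [← Real.rpow_natCast, ← Real.rpow_natCast, ← Real.rpow_mul hε.le, ← Real.rpow_mul hε.le,
      ← Real.rpow_add hε]
  _ ≤ ε ^ c := Real.rpow_le_rpow_of_exponent_ge hε hε₁ hc

end MonomialNorm

section Integrability

theorem integrableOn_abs_rpow_ball {s : ℝ} (hs : -1 < s) (r : ℝ) :
    IntegrableOn (fun x : ℝ => |x| ^ s) (Metric.ball 0 r) := by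
  refine integrableOn_ball_of_norm_le_rpow (C := 1) (α := -s) (by simp) (by simpa using by linarith)
    (ae_of_all _ fun x => ?_)
    (continuous_abs.measurable.pow_const s).aestronglyMeasurable
  simp [abs_of_nonneg (Real.rpow_nonneg (abs_nonneg x) s)]

theorem ae_fst_ne_zero_and_snd_ne_zero : ∀ᵐ p : ℝ × ℝ, p.1 ≠ 0 ∧ p.2 ≠ 0 :=
  (Measure.quasiMeasurePreserving_fst.ae (Measure.ae_ne volume (0 : ℝ))).and
    (Measure.quasiMeasurePreserving_snd.ae (Measure.ae_ne volume (0 : ℝ)))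

theorem integrableOn_rpow_neg_of_abs_rpow_mul_abs_rpow_le {f : ℝ × ℝ → ℝ} {s t r : ℝ}
    (ht : 0 ≤ t) (hts : t * s < 1) (hf : AEMeasurable f (volume.restrict (Metric.ball 0 r)))
    (hle : ∀ p ∈ Metric.ball (0 : ℝ × ℝ) r, p.1 ≠ 0 → p.2 ≠ 0 → |p.1| ^ s * |p.2| ^ s ≤ f p) :
    IntegrableOn (fun p => f p ^ (-t)) (Metric.ball 0 r) := by
  have hs : -1 < s * -t := by linarith
  have hdom : IntegrableOn (fun p : ℝ × ℝ => |p.1| ^ (s * -t) * |p.2| ^ (s * -t))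
      (Metric.ball 0 r) := by
    have h := (integrableOn_abs_rpow_ball hs r).integrable.mul_prod
      (integrableOn_abs_rpow_ball hs r).integrable
    rwa [Measure.prod_restrict, ball_prod_same] at h
  refine Integrable.mono' hdom (hf.pow_const _).aestronglyMeasurable ?_
  filter_upwards [ae_restrict_of_ae ae_fst_ne_zero_and_snd_ne_zero,
    ae_restrict_mem Metric.isOpen_ball.measurableSet] with p ⟨h₁, h₂⟩ hp
  have hx := abs_pos.2 h₁
  have hy := abs_pos.2 h₂
  have hfp := hle p hp h₁ h₂
  have hpos : 0 < |p.1| ^ s * |p.2| ^ s := by positivity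
  calc ‖f p ^ (-t)‖ = f p ^ (-t) := Real.norm_of_nonneg (Real.rpow_nonneg (hpos.le.trans hfp) _)
    _ ≤ (|p.1| ^ s * |p.2| ^ s) ^ (-t) :=
      Real.rpow_le_rpow_of_nonpos hpos hfp (neg_nonpos.2 ht)
    _ = |p.1| ^ (s * -t) * |p.2| ^ (s * -t) := by
      rw [Real.mul_rpow (by positivity) (by positivity), Real.rpow_mul hx.le, Real.rpow_mul hy.le]

end Integrability

section NonIntegrability

theorem not_integrableOn_of_tendsto_measure_zero {X ι E : Type*} [MeasurableSpace X]
    {μ : Measure X} [NormedAddCommGroup E] {f : X → E} {l : Filter ι} [l.NeBot] {B : ι → Set X}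
    {U : Set X} {c : ENNReal} (hc : c ≠ 0) (hBU : ∀ᶠ i in l, B i ⊆ U)
    (hB : Tendsto (fun i => μ (B i)) l (𝓝 0)) (hf : ∀ᶠ i in l, c ≤ ∫⁻ x in B i, ‖f x‖ₑ ∂μ) :
    ¬ IntegrableOn f U μ := by
  intro hint
  have hB' : Tendsto (fun i => μ.restrict U (B i)) l (𝓝 0) :=
    tendsto_of_tendsto_of_tendsto_of_le_of_le tendsto_const_nhds hB (fun _ => zero_le)
      fun i => Measure.restrict_le_self (B i)
  have hlt := (tendsto_setLIntegral_zero hint.2.ne hB').eventually_lt_const (pos_iff_ne_zero.2 hc)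
  obtain ⟨i, hi, hiU, hci⟩ := (hlt.and (hBU.and hf)).exists
  rw [Measure.restrict_restrict_of_subset hiU] at hi
  exact hi.not_ge hci

/-- The open box in the first quadrant with one corner at the origin and side lengths `δ * ε ^ α`
and `δ * ε ^ β`. The factor `δ` makes the box small even when one of the exponents vanishes. -/
def anisotropicBox (α β δ ε : ℝ) : Set (ℝ × ℝ) :=
  Ioo 0 (δ * ε ^ α) ×ˢ Ioo 0 (δ * ε ^ β)

variable {α β δ ε : ℝ}

theorem measurableSet_anisotropicBox : MeasurableSet (anisotropicBox α β δ ε) :=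
  measurableSet_Ioo.prod measurableSet_Ioo

theorem volume_anisotropicBox (hδ : 0 ≤ δ) (hε : 0 < ε) :
    volume (anisotropicBox α β δ ε) = ENNReal.ofReal (δ ^ 2 * ε ^ (α + β)) := by
  rw [anisotropicBox, Measure.volume_eq_prod, Measure.prod_prod, Real.volume_Ioo,
    Real.volume_Ioo, sub_zero, sub_zero, ← ENNReal.ofReal_mul (by positivity), Real.rpow_add hε]
  ring_nf

theorem tendsto_volume_anisotropicBox (hαβ : 0 < α + β) (hδ : 0 ≤ δ) :
    Tendsto (fun ε => volume (anisotropicBox α β δ ε)) (𝓝[>] 0) (𝓝 0) := by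
  have hpow : Tendsto (fun ε : ℝ => δ ^ 2 * ε ^ (α + β)) (𝓝[>] 0) (𝓝 0) := by
    have h : ContinuousAt (fun ε : ℝ => δ ^ 2 * ε ^ (α + β)) 0 :=
      continuousAt_const.mul (Real.continuousAt_rpow_const _ _ (Or.inr hαβ.le))
    simpa [ContinuousAt, Real.zero_rpow hαβ.ne'] using h.mono_left nhdsWithin_le_nhds
  have hvol : Tendsto (fun ε => ENNReal.ofReal (δ ^ 2 * ε ^ (α + β))) (𝓝[>] 0) (𝓝 0) := by
    simpa using ENNReal.tendsto_ofReal hpow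
  refine hvol.congr' ?_
  filter_upwards [self_mem_nhdsWithin] with ε hε using (volume_anisotropicBox hδ hε).symm

theorem anisotropicBox_subset_ball (hα : 0 ≤ α) (hβ : 0 ≤ β) (hδ : 0 ≤ δ) (hε : 0 ≤ ε)
    (hε₁ : ε ≤ 1) : anisotropicBox α β δ ε ⊆ Metric.ball 0 δ := by
  rintro ⟨x, y⟩ ⟨⟨hx₀, hx⟩, ⟨hy₀, hy⟩⟩
  have hxδ : x < δ := hx.trans_le (mul_le_of_le_one_right hδ (Real.rpow_le_one hε hε₁ hα))
  have hyδ : y < δ := hy.trans_le (mul_le_of_le_one_right hδ (Real.rpow_le_one hε hε₁ hβ))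
  simpa [Prod.norm_def, abs_of_pos hx₀, abs_of_pos hy₀] using ⟨hxδ, hyδ⟩

theorem ofReal_le_setLIntegral_rpow_neg {f : ℝ × ℝ → ℝ} {c t C : ℝ} (ht : 0 ≤ t)
    (htc : α + β ≤ t * c) (hC : 0 ≤ C) (hδ : 0 ≤ δ) (hε : 0 < ε) (hε₁ : ε ≤ 1)
    (hf : ∀ p ∈ anisotropicBox α β δ ε, 0 < f p ∧ f p ≤ C * ε ^ c) :
    ENNReal.ofReal (C ^ (-t) * δ ^ 2) ≤
      ∫⁻ p in anisotropicBox α β δ ε, ‖f p ^ (-t)‖ₑ := by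
  have hε_rpow : ∀ s : ℝ, 0 ≤ ε ^ s := fun s => Real.rpow_nonneg hε.le s
  have hlower : ∀ p ∈ anisotropicBox α β δ ε, C ^ (-t) * ε ^ (-(α + β)) ≤ f p ^ (-t) := by
    intro p hp
    obtain ⟨hpos, hle⟩ := hf p hp
    calc C ^ (-t) * ε ^ (-(α + β)) ≤ C ^ (-t) * ε ^ (c * -t) := by
          refine mul_le_mul_of_nonneg_left ?_ (Real.rpow_nonneg hC _)
          exact Real.rpow_le_rpow_of_exponent_ge hε hε₁ (by linarith)
      _ = (C * ε ^ c) ^ (-t) := by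
          rw [Real.mul_rpow hC (hε_rpow c), Real.rpow_mul hε.le]
      _ ≤ f p ^ (-t) := Real.rpow_le_rpow_of_nonpos hpos hle (neg_nonpos.2 ht)
  calc ENNReal.ofReal (C ^ (-t) * δ ^ 2)
      = ENNReal.ofReal (C ^ (-t) * ε ^ (-(α + β))) * volume (anisotropicBox α β δ ε) := by
        have hcancel : ε ^ (-(α + β)) * ε ^ (α + β) = 1 := by
          rw [← Real.rpow_add hε, neg_add_cancel, Real.rpow_zero]
        rw [volume_anisotropicBox hδ hε,
          ← ENNReal.ofReal_mul (mul_nonneg (Real.rpow_nonneg hC _) (hε_rpow _))]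
        congr 1
        linear_combination (-(C ^ (-t) * δ ^ 2)) * hcancel
    _ = ∫⁻ _ in anisotropicBox α β δ ε, ENNReal.ofReal (C ^ (-t) * ε ^ (-(α + β))) :=
        (setLIntegral_const _ _).symm
    _ ≤ ∫⁻ p in anisotropicBox α β δ ε, ‖f p ^ (-t)‖ₑ :=
        setLIntegral_mono' measurableSet_anisotropicBox fun p hp =>
          (ENNReal.ofReal_le_ofReal (hlower p hp)).trans (Real.ofReal_le_enorm _)

theorem not_integrableOn_rpow_neg_of_le_on_anisotropicBox {f : ℝ × ℝ → ℝ} {U : Set (ℝ × ℝ)}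
    {c t C : ℝ} (hU : U ∈ 𝓝 0) (hα : 0 ≤ α) (hβ : 0 ≤ β) (hαβ : 0 < α + β) (ht : 0 ≤ t)
    (htc : α + β ≤ t * c) (hC : 0 < C)
    (hf : ∀ ε ∈ Ioc (0 : ℝ) 1, ∀ p ∈ anisotropicBox α β 1 ε, 0 < f p ∧ f p ≤ C * ε ^ c) :
    ¬ IntegrableOn (fun p => f p ^ (-t)) U := by
  obtain ⟨r, hr, hball⟩ := Metric.mem_nhds_iff.1 hU
  set δ := min r 1
  have hδ : 0 < δ := lt_min hr one_pos
  have hsub : ∀ ε : ℝ, 0 ≤ ε → anisotropicBox α β δ ε ⊆ anisotropicBox α β 1 ε := fun ε hε =>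
    have hle : ∀ s : ℝ, δ * ε ^ s ≤ 1 * ε ^ s := fun s =>
      mul_le_mul_of_nonneg_right (min_le_right r 1) (Real.rpow_nonneg hε s)
    Set.prod_mono (Ioo_subset_Ioo_right (hle α)) (Ioo_subset_Ioo_right (hle β))
  have hε : ∀ᶠ ε : ℝ in 𝓝[>] 0, ε ∈ Ioc (0 : ℝ) 1 := Ioc_mem_nhdsGT one_pos
  refine not_integrableOn_of_tendsto_measure_zero (l := 𝓝[>] (0 : ℝ))
    (B := anisotropicBox α β δ) (c := ENNReal.ofReal (C ^ (-t) * δ ^ 2))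
    (ENNReal.ofReal_pos.2 (by positivity)).ne' ?_ (tendsto_volume_anisotropicBox hαβ hδ.le) ?_
  · filter_upwards [hε] with ε ⟨hε₀, hε₁⟩
    exact (anisotropicBox_subset_ball hα hβ hδ.le hε₀.le hε₁).trans
      ((Metric.ball_subset_ball (min_le_left r 1)).trans hball)
  · filter_upwards [hε] with ε hε
    exact ofReal_le_setLIntegral_rpow_neg ht htc hC.le hδ.le hε.1 hε.2
      fun p hp => hf ε hε p (hsub ε hε.1.le hp)

theorem not_integrableOn_monomialNorm_rpow_neg {V : Finset (ℕ × ℕ)} (hV : V.Nonempty)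
    {U : Set (ℝ × ℝ)} {c t : ℝ} (hU : U ∈ 𝓝 0) (hα : 0 ≤ α) (hβ : 0 ≤ β) (hαβ : 0 < α + β)
    (ht : 0 ≤ t) (htc : α + β ≤ t * c) (hVc : ∀ a ∈ V, c ≤ α * a.1 + β * a.2) :
    ¬ IntegrableOn (fun p => monomialNorm V p ^ (-t)) U := by
  have hcard : 0 < √(V.card : ℝ) := Real.sqrt_pos.2 (Nat.cast_pos.2 hV.card_pos)
  refine not_integrableOn_rpow_neg_of_le_on_anisotropicBox hU hα hβ hαβ ht htc hcard ?_
  rintro ε ⟨hε, hε₁⟩ p ⟨⟨hx₀, hx⟩, ⟨hy₀, hy⟩⟩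
  rw [one_mul] at hx hy
  refine ⟨monomialNorm_pos hV hx₀.ne' hy₀.ne',
    monomialNorm_le_of_forall_le (Real.rpow_nonneg hε.le c) fun a ha => ?_⟩
  rw [abs_of_pos hx₀, abs_of_pos hy₀]
  exact pow_mul_pow_le_rpow hε hε₁ hx₀.le hy₀.le hx.le hy.le (hVc a ha)

end NonIntegrability

theorem integrableOn_vertexFn_rpow_neg {F : ℝ → ℝ → ℝ} (hF : (tsupp F).Nonempty) {s t : ℝ}
    (ht : 0 ≤ t) (hs : (s, s) ∈ newtonPolygon F) (hts : t * s < 1) :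
    IntegrableOn (fun p : ℝ × ℝ => vertexFn F p.1 p.2 ^ (-t)) (Metric.ball 0 1) := by
  simp only [vertexFn_eq_monomialNorm]
  refine integrableOn_rpow_neg_of_abs_rpow_mul_abs_rpow_le ht hts
    (continuous_monomialNorm _).measurable.aemeasurable fun p hp hp₁ hp₂ => ?_
  have hp' : |p.1| < 1 ∧ |p.2| < 1 := by simpa [Prod.norm_def] using hp
  refine rpow_mul_rpow_le_monomialNorm (fun u w hu hw => ?_) hp₁ hp₂ hp'.1 hp'.2
  obtain ⟨a, ha, hmin⟩ := exists_mem_newtonVertices_forall_le hF hu hw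
  exact ⟨a, ha, hmin _ hs⟩

theorem not_integrableOn_vertexFn_rpow_neg {F : ℝ → ℝ → ℝ} (hF : (tsupp F).Nonempty) {t : ℝ}
    (ht : 0 ≤ t) (htd : 1 ≤ t * newtonDist F) {U : Set (ℝ × ℝ)} (hU : U ∈ 𝓝 0) :
    ¬ IntegrableOn (fun p : ℝ × ℝ => vertexFn F p.1 p.2 ^ (-t)) U := by
  obtain ⟨α, β, hα, hβ, hαβ, hline⟩ := exists_supporting_line_at_newtonDist hF
  have htc : α + β ≤ t * ((α + β) * newtonDist F) := by
    rw [mul_left_comm]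
    exact le_mul_of_one_le_right hαβ.le htd
  simp only [vertexFn_eq_monomialNorm]
  exact not_integrableOn_monomialNorm_rpow_neg (newtonVertices_nonempty hF) hU hα hβ hαβ ht htc
    fun a ha => hline _ (mem_newtonVertices.1 ha).1

theorem stmt_12_general {F : ℝ → ℝ → ℝ} (hF : (tsupp F).Nonempty) {t : ℝ} (ht : 0 < t) :
    (∃ U ∈ 𝓝 ((0 : ℝ), (0 : ℝ)),
        IntegrableOn (fun p : ℝ × ℝ => vertexFn F p.1 p.2 ^ (-t)) U) ↔
      t * newtonDist F < 1 := by
  constructor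
  · rintro ⟨U, hU, hint⟩
    by_contra! htd
    exact not_integrableOn_vertexFn_rpow_neg hF ht.le htd hU hint
  · intro htd
    obtain ⟨s, hs, hst⟩ := exists_lt_of_csInf_lt (exists_diagonal_mem_newtonPolygon hF)
      ((lt_div_iff₀' ht).2 htd)
    exact ⟨_, Metric.ball_mem_nhds _ one_pos,
      integrableOn_vertexFn_rpow_neg hF ht.le hs ((lt_div_iff₀' ht).1 hst)⟩

/-- Varchenko-type integrability: `F*^{-t}` is integrable near the origin iff `t < 1/d(F)`. -/
theorem stmt_12 (F : ℝ → ℝ → ℝ) (U₀ : Set (ℝ × ℝ)) (hU₀ : U₀ ∈ 𝓝 ((0 : ℝ), (0 : ℝ)))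
    (hsm : ContDiffOn ℝ (⊤ : ℕ∞) (fun p : ℝ × ℝ => F p.1 p.2) U₀)
    (h0 : F 0 0 = 0) (hgrad : fderiv ℝ (fun p : ℝ × ℝ => F p.1 p.2) (0, 0) = 0)
    (hts : (tsupp F).Nonempty) :
    ∀ t > (0 : ℝ),
      ((∃ U ∈ 𝓝 ((0 : ℝ), (0 : ℝ)),
          IntegrableOn (fun p : ℝ × ℝ => vertexFn F p.1 p.2 ^ (-t)) U) ↔
        t < 1 / newtonDist F) := by
  intro t ht
  rw [stmt_12_general hts ht, lt_div_iff₀ (newtonDist_pos h0 hts)]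

end
end
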